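/- arXiv:2107.11528 — 2 statements merged into one kernel-verified Lean document; each statement's English description precedes it below -/
import Mathlib

section
/- (Morawetz identity) Let u, F : ℝ × ℝ³ → ℂ be smooth functions such that u(t,·) and F(t,·) are Schwartz functions for every t, with Schwartz seminorms of u(t,·), ∂ₜu(t,·) and F(t,·) bounded uniformly for t in compact intervals, and suppose i ∂ₜu(t,x) + Δu(t,x) = F(t,x) for all (t,x). Let w : ℝ³ → ℝ be smooth with all derivatives of order ≥ 1 polynomially bounded, and set M_w(t) = 2 Im ∫_{ℝ³} ∇w(x) · ∇u(t,x) conj(u(t,x)) dx. Then for every t, (d/dt) M_w(t) = ∫_{ℝ³} (−ΔΔw)(x) |u(t,x)|² dx + 4 ∫_{ℝ³} ∂_j∂_k w(x) Re( ∂_j conj(u) ∂_k u )(t,x) dx + 2 ∫_{ℝ³} ∂_j w(x) {F,u}_P^j(t,x) dx, where {f,g}_P = Re( f ∇conj(g) − g ∇conj(f) ) and repeated indices j,k ∈ {1,2,3} are summed. -/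
open MeasureTheory Real Filter
open scoped BigOperators Topology

noncomputable section

/-- Three-dimensional Euclidean space. -/
abbrev E3 : Type := EuclideanSpace ℝ (Fin 3)

/-- The `j`-th standard basis vector of `E3`. -/
def e3 (j : Fin 3) : E3 := EuclideanSpace.single j 1

/-- The `j`-th spatial partial derivative of a complex-valued function. -/
def pd (j : Fin 3) (f : E3 → ℂ) (x : E3) : ℂ := fderiv ℝ f x (e3 j)

/-- The `j`-th spatial partial derivative of a real-valued function. -/
def pdR (j : Fin 3) (w : E3 → ℝ) (x : E3) : ℝ := fderiv ℝ w x (e3 j)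

/-- The Laplacian of a complex-valued function on `E3`. -/
def lap (f : E3 → ℂ) (x : E3) : ℂ := ∑ j : Fin 3, pd j (fun y => pd j f y) x

/-- The Laplacian of a real-valued function on `E3`. -/
def lapR (w : E3 → ℝ) (x : E3) : ℝ := ∑ j : Fin 3, pdR j (fun y => pdR j w y) x

/-- Second partial derivatives `∂_j ∂_k w` of a real-valued function on `E3`. -/
def pdR2 (j k : Fin 3) (w : E3 → ℝ) (x : E3) : ℝ := pdR j (fun y => pdR k w y) x

/-- A smooth Schwartz solution of the inhomogeneous cubic NLS with inverse-square
potential: `i ∂ₜ u + Δu − (a/|x|²) u = λ |x|^{−b} |u|² u` on `ℝ × (ℝ³ \ {0})`,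
with `u(t,·)` Schwartz for each time, and Schwartz seminorms of `u(t,·)`
and `∂ₜ u(t,·)` locally uniformly bounded in `t`. -/
structure IsSchwartzSolution (a b lam : ℝ) (u : ℝ → E3 → ℂ) : Prop where
  smooth : ContDiff ℝ (⊤ : ℕ∞) (Function.uncurry u)
  schwartz : ∀ t : ℝ, ∃ f : SchwartzMap E3 ℂ, ∀ x : E3, f x = u t x
  schwartz_dt : ∀ t : ℝ, ∃ f : SchwartzMap E3 ℂ, ∀ x : E3,
      f x = deriv (fun s => u s x) t
  unif_bound : ∀ (k n : ℕ) (T : ℝ), 0 < T → ∃ C : ℝ, ∀ t ∈ Set.Icc (-T) T, ∀ x : E3,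
      ‖x‖ ^ k * ‖iteratedFDeriv ℝ n (u t) x‖
        + ‖x‖ ^ k * ‖iteratedFDeriv ℝ n (fun y => deriv (fun s => u s y) t) x‖ ≤ C
  eqn : ∀ (t : ℝ) (x : E3), x ≠ 0 →
      Complex.I * deriv (fun s => u s x) t + lap (u t) x
          - ((a / ‖x‖ ^ 2 : ℝ) : ℂ) * u t x
        = (lam : ℂ) * ((‖x‖ ^ (-b) : ℝ) : ℂ) * ((‖u t x‖ ^ 2 : ℝ) : ℂ) * u t x

/-!
For the real inner product of `ℂ = ℝ²`, multiplication by `i` is a skew map `J` and the density of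
`M_w` is `2 ∑ⱼ ∂ⱼw ⟪J u, ∂ⱼu⟫`. With `{f, g}ⱼ = ⟪f, ∂ⱼg⟫ - ⟪g, ∂ⱼf⟫`, skewness and the equation give
`∂ₜ⟪J u, ∂ⱼu⟫ = {J ∂ₜu, u}ⱼ = {F, u}ⱼ - {Δu, u}ⱼ`, and the product rule gives local conservation of
momentum, `2 {Δu, u}ⱼ = ∑ₖ (4 ∂ₖ⟪∂ⱼu, ∂ₖu⟫ - ∂ⱼ∂ₖ∂ₖ|u|²)`. Multiplying by `∂ⱼw` and integrating by
parts, once in the first term and three times in the second, yields the identity.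
-/

open SchwartzMap LineDeriv

namespace Morawetz

local notation "⟪" f "," g "⟫" => pairing (innerSL ℝ) f g

section Derivatives

variable {E G : Type*} [NormedAddCommGroup E] [NormedSpace ℝ E]
  [NormedAddCommGroup G] [NormedSpace ℝ G]

theorem fderiv_fderiv_apply_comm {f : E → G} (hf : ContDiff ℝ 2 f) (a b x : E) :
    fderiv ℝ (fun y => fderiv ℝ f y a) x b = fderiv ℝ (fun y => fderiv ℝ f y b) x a := by
  have hdf : Differentiable ℝ (fderiv ℝ f) :=
    (hf.fderiv_right (m := 1) le_rfl).differentiable one_ne_zero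
  have hsymm : IsSymmSndFDerivAt ℝ f x :=
    hf.contDiffAt.isSymmSndFDerivAt (by simp)
  simpa [fderiv_clm_apply (hdf x) (differentiableAt_const _)] using hsymm b a

theorem hasTemperateGrowth_fderiv_apply_of_bound {f : E → G} (hf : ContDiff ℝ (⊤ : ℕ∞) f)
    (hbound : ∀ n : ℕ, 1 ≤ n → ∃ C : ℝ, ∃ m : ℕ, ∀ x : E,
      ‖iteratedFDeriv ℝ n f x‖ ≤ C * (1 + ‖x‖) ^ m) (v : E) :
    (fun x => fderiv ℝ f x v).HasTemperateGrowth := by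
  have h_fderiv : (fderiv ℝ f).HasTemperateGrowth := by
    refine ⟨hf.fderiv_right le_rfl, fun n => ?_⟩
    obtain ⟨C, m, hC⟩ := hbound (n + 1) (Nat.le_add_left 1 n)
    exact ⟨m, C, fun x => norm_iteratedFDeriv_fderiv.trans_le (hC x)⟩
  exact (ContinuousLinearMap.apply ℝ G v).hasTemperateGrowth.comp h_fderiv

theorem hasTemperateGrowth_fderiv_apply {f : E → G} (hf : f.HasTemperateGrowth) (v : E) :
    (fun x => fderiv ℝ f x v).HasTemperateGrowth := by
  refine hasTemperateGrowth_fderiv_apply_of_bound hf.1 (fun n _ => ?_) v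
  obtain ⟨m, C, hC⟩ := hf.2 n
  exact ⟨C, m, hC⟩

theorem lineDerivOp_comm (a b : E) (φ : 𝓢(E, G)) : ∂_{a} (∂_{b} φ) = ∂_{b} (∂_{a} φ) := by
  ext x
  exact fderiv_fderiv_apply_comm (φ.smooth 2) b a x

theorem lineDerivOp_postcompCLM {H : Type*} [NormedAddCommGroup H] [NormedSpace ℝ H]
    (L : G →L[ℝ] H) (v : E) (φ : 𝓢(E, G)) :
    ∂_{v} (postcompCLM L φ) = postcompCLM L (∂_{v} φ) := by
  ext x
  exact DFunLike.congr_fun (L.hasFDerivAt.comp x φ.differentiableAt.hasFDerivAt).fderiv v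

theorem hasDerivAt_fderiv_apply {u : ℝ → E → G}
    (hu : ContDiff ℝ 2 fun p : ℝ × E => u p.1 p.2) (v : E) (s : ℝ) (x : E) :
    HasDerivAt (fun r => fderiv ℝ (u r) x v)
      (fderiv ℝ (fun y => deriv (fun r => u r y) s) x v) s := by
  set U : ℝ × E → G := fun p => u p.1 p.2
  have hU : Differentiable ℝ U := hu.differentiable two_ne_zero
  have h_time (r : ℝ) (y : E) : deriv (fun r => u r y) r = fderiv ℝ U (r, y) (1, 0) :=
    ((hU (r, y)).hasFDerivAt.comp_hasDerivAt_of_eq r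
      ((hasDerivAt_id r).prodMk (hasDerivAt_const r y)) rfl).deriv
  have h_space (r : ℝ) (y : E) : fderiv ℝ (u r) y v = fderiv ℝ U (r, y) (0, v) := by
    have : HasFDerivAt (u r) _ y :=
      (hU (r, y)).hasFDerivAt.comp y (hasFDerivAt_prodMk_right r y)
    simp [this.fderiv]
  have hdU (a : ℝ × E) : Differentiable ℝ fun p => fderiv ℝ U p a :=
    ((hu.fderiv_right (m := 1) le_rfl).clm_apply contDiff_const).differentiable one_ne_zero
  have h_mixed : fderiv ℝ (fun y => deriv (fun r => u r y) s) x v =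
      fderiv ℝ (fun p => fderiv ℝ U p (0, v)) (s, x) (1, 0) := by
    have : HasFDerivAt (fun y => fderiv ℝ U (s, y) (1, 0)) _ x :=
      (hdU (1, 0) (s, x)).hasFDerivAt.comp x (hasFDerivAt_prodMk_right s x)
    simp only [h_time, this.fderiv]
    simpa using fderiv_fderiv_apply_comm hu (1, 0) (0, v) (s, x)
  simp only [h_space, h_mixed]
  exact (hdU (0, v) (s, x)).hasFDerivAt.comp_hasDerivAt s
    ((hasDerivAt_id s).prodMk (hasDerivAt_const s x))

end Derivatives

section Pairing

variable {E G₁ G₂ G₃ : Type*} [NormedAddCommGroup E] [NormedSpace ℝ E]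
  [NormedAddCommGroup G₁] [NormedSpace ℝ G₁] [NormedAddCommGroup G₂] [NormedSpace ℝ G₂]
  [NormedAddCommGroup G₃] [NormedSpace ℝ G₃]

theorem lineDerivOp_pairing (B : G₁ →L[ℝ] G₂ →L[ℝ] G₃) (f : 𝓢(E, G₁)) (g : 𝓢(E, G₂)) (v : E) :
    ∂_{v} (pairing B f g) = pairing B (∂_{v} f) g + pairing B f (∂_{v} g) := by
  ext x
  have h := B.fderiv_of_bilinear (x := x) f.differentiableAt g.differentiableAt
  simp [lineDerivOp_apply_eq_fderiv, pairing_apply, h, add_comm]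

theorem seminorm_pairing_le (B : G₁ →L[ℝ] G₂ →L[ℝ] G₃) (k : ℕ) (f : 𝓢(E, G₁)) (g : 𝓢(E, G₂)) :
    SchwartzMap.seminorm ℝ k 0 (pairing B f g) ≤
      ‖B‖ * SchwartzMap.seminorm ℝ k 0 f * SchwartzMap.seminorm ℝ 0 0 g := by
  refine SchwartzMap.seminorm_le_bound ℝ k 0 _ (by positivity) fun x => ?_
  rw [norm_iteratedFDeriv_zero, pairing_apply_apply]
  calc ‖x‖ ^ k * ‖B (f x) (g x)‖ ≤ ‖x‖ ^ k * (‖B‖ * ‖f x‖ * ‖g x‖) := by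
        gcongr; exact B.le_opNorm₂ _ _
    _ = ‖B‖ * (‖x‖ ^ k * ‖f x‖) * ‖g x‖ := by ring
    _ ≤ _ := by
        gcongr
        · exact norm_pow_mul_le_seminorm ℝ f k x
        · exact norm_le_seminorm ℝ g x

end Pairing

section BoundedFamily

variable {α E G G₁ G₂ H : Type*} [NormedAddCommGroup E] [NormedSpace ℝ E]
  [NormedAddCommGroup G] [NormedSpace ℝ G] [NormedAddCommGroup H] [NormedSpace ℝ H]
  [NormedAddCommGroup G₁] [NormedSpace ℝ G₁] [NormedAddCommGroup G₂] [NormedSpace ℝ G₂]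

theorem isVonNBounded_image_of_decay_le {f : α → 𝓢(E, G)} {N : Set α}
    (hf : ∀ k n : ℕ, ∃ C, ∀ s ∈ N, ∀ x, ‖x‖ ^ k * ‖iteratedFDeriv ℝ n (f s) x‖ ≤ C) :
    Bornology.IsVonNBounded ℝ (f '' N) := by
  rw [(schwartz_withSeminorms ℝ E G).image_isVonNBounded_iff_seminorm_bounded]
  rintro ⟨k, n⟩
  obtain ⟨C, hC⟩ := hf k n
  refine ⟨max C 0 + 1, by positivity, fun s hs => ?_⟩
  exact (SchwartzMap.seminorm_le_bound ℝ k n _ (le_max_right C 0)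
    fun x => (hC s hs x).trans (le_max_left C 0)).trans_lt (lt_add_one _)

theorem exists_seminorm_le_of_isVonNBounded {f : α → 𝓢(E, G)} {N : Set α}
    (hf : Bornology.IsVonNBounded ℝ (f '' N)) (k n : ℕ) :
    ∃ C, ∀ s ∈ N, SchwartzMap.seminorm ℝ k n (f s) ≤ C := by
  obtain ⟨C, -, hC⟩ :=
    ((schwartz_withSeminorms ℝ E G).image_isVonNBounded_iff_seminorm_bounded f).1 hf (k, n)
  exact ⟨C, fun s hs => (hC s hs).le⟩

theorem exists_seminorm_pairing_le (B : G₁ →L[ℝ] G₂ →L[ℝ] G) {f : α → 𝓢(E, G₁)}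
    {g : α → 𝓢(E, G₂)} {N : Set α} (hf : Bornology.IsVonNBounded ℝ (f '' N))
    (hg : Bornology.IsVonNBounded ℝ (g '' N)) (k : ℕ) :
    ∃ C, ∀ s ∈ N, SchwartzMap.seminorm ℝ k 0 (pairing B (f s) (g s)) ≤ C := by
  obtain ⟨C₁, hC₁⟩ := exists_seminorm_le_of_isVonNBounded hf k 0
  obtain ⟨C₂, hC₂⟩ := exists_seminorm_le_of_isVonNBounded hg 0 0
  refine ⟨‖B‖ * C₁ * C₂, fun s hs => (seminorm_pairing_le B k (f s) (g s)).trans ?_⟩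
  have h₁ := hC₁ s hs
  have h₂ := hC₂ s hs
  have : 0 ≤ C₁ := (apply_nonneg _ _).trans h₁
  gcongr

theorem isVonNBounded_image_comp (T : 𝓢(E, G) →L[ℝ] 𝓢(E, H)) {f : α → 𝓢(E, G)} {N : Set α}
    (hf : Bornology.IsVonNBounded ℝ (f '' N)) :
    Bornology.IsVonNBounded ℝ ((fun s => T (f s)) '' N) := by
  simpa [Set.image_image] using hf.image T

end BoundedFamily

section MomentumBracket

variable {E V : Type*} [NormedAddCommGroup E] [NormedSpace ℝ E]
  [NormedAddCommGroup V] [InnerProductSpace ℝ V]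

/-- The component along `v` of the momentum bracket `{f, g}_P`. The complex expression
`Re (f ∂ᵥ(conj g) - g ∂ᵥ(conj f))` only involves the real inner product of `ℂ`, so values in any
real inner product space are allowed. -/
def momentumBracket (v : E) (f g : 𝓢(E, V)) : 𝓢(E, ℝ) :=
  ⟪f, ∂_{v} g⟫ - ⟪g, ∂_{v} f⟫

theorem pairing_inner_apply (f g : 𝓢(E, V)) (x : E) : ⟪f, g⟫ x = inner ℝ (f x) (g x) := rfl

theorem pairing_inner_comm (f g : 𝓢(E, V)) : ⟪f, g⟫ = ⟪g, f⟫ := by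
  ext x
  exact real_inner_comm _ _

theorem lineDerivOp_lineDerivOp_pairing_self (v : E) (φ : 𝓢(E, V)) :
    ∂_{v} (∂_{v} ⟪φ, φ⟫) = (2 : ℝ) • ⟪φ, ∂_{v} (∂_{v} φ)⟫ + (2 : ℝ) • ⟪∂_{v} φ, ∂_{v} φ⟫ := by
  simp only [lineDerivOp_pairing, lineDerivOp_add, pairing_inner_comm _ φ]
  module

theorem two_smul_momentumBracket_lineDerivOp_lineDerivOp (a b : E) (φ : 𝓢(E, V)) :
    (2 : ℝ) • momentumBracket a (∂_{b} (∂_{b} φ)) φ =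
      (4 : ℝ) • ∂_{b} ⟪∂_{a} φ, ∂_{b} φ⟫ - ∂_{a} (∂_{b} (∂_{b} ⟪φ, φ⟫)) := by
  rw [lineDerivOp_lineDerivOp_pairing_self]
  simp only [momentumBracket, lineDerivOp_pairing, lineDerivOp_add, lineDerivOp_smul,
    lineDerivOp_comm a b, pairing_inner_comm (∂_{b} (∂_{b} φ)), pairing_inner_comm (∂_{b} φ)]
  module

end MomentumBracket

section WeightedIntegral

variable {E ι : Type*} [NormedAddCommGroup E] [NormedSpace ℝ E] [MeasurableSpace E]
  [BorelSpace E] [SecondCountableTopology E] (μ : Measure E) [μ.HasTemperateGrowth]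

/-- Integration against the weight `a`, the functional `ψ ↦ ∫ x, a x * ψ x ∂μ` on Schwartz
functions. It takes the junk value `0` unless `a` has temperate growth. -/
def weightedIntegral (a : E → ℝ) : 𝓢(E, ℝ) →L[ℝ] ℝ :=
  integralCLM ℝ μ ∘L smulLeftCLM ℝ a

theorem weightedIntegral_apply {a : E → ℝ} (ha : a.HasTemperateGrowth) (ψ : 𝓢(E, ℝ)) :
    weightedIntegral μ a ψ = ∫ x, a x * ψ x ∂μ := by
  simp [weightedIntegral, integralCLM_apply, smulLeftCLM_apply_apply ha]

theorem integrable_mul_of_hasTemperateGrowth {a : E → ℝ} (ha : a.HasTemperateGrowth)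
    (ψ : 𝓢(E, ℝ)) : Integrable (fun x => a x * ψ x) μ := by
  simpa [smulLeftCLM_apply ha] using (smulLeftCLM ℝ a ψ).integrable (μ := μ)

theorem weightedIntegral_sum {s : Finset ι} {a : ι → E → ℝ}
    (ha : ∀ i ∈ s, (a i).HasTemperateGrowth) (ψ : 𝓢(E, ℝ)) :
    weightedIntegral μ (fun x => ∑ i ∈ s, a i x) ψ = ∑ i ∈ s, weightedIntegral μ (a i) ψ := by
  simp [weightedIntegral, smulLeftCLM_sum ha]

theorem integral_sum_mul {s : Finset ι} {a : ι → E → ℝ}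
    (ha : ∀ i ∈ s, (a i).HasTemperateGrowth) (ψ : ι → 𝓢(E, ℝ)) :
    ∫ x, ∑ i ∈ s, a i x * ψ i x ∂μ = ∑ i ∈ s, weightedIntegral μ (a i) (ψ i) := by
  rw [integral_finsetSum _ fun i hi => integrable_mul_of_hasTemperateGrowth μ (ha i hi) _]
  exact Finset.sum_congr rfl fun i hi => (weightedIntegral_apply μ (ha i hi) _).symm

theorem integral_sum_sum_mul {κ : Type*} [Fintype ι] [Fintype κ] {a : ι → κ → E → ℝ}
    (ha : ∀ i k, (a i k).HasTemperateGrowth) (ψ : ι → κ → 𝓢(E, ℝ)) :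
    ∫ x, ∑ i, ∑ k, a i k x * ψ i k x ∂μ = ∑ i, ∑ k, weightedIntegral μ (a i k) (ψ i k) := by
  simpa only [Fintype.sum_prod_type] using integral_sum_mul μ (s := Finset.univ)
    (a := fun p : ι × κ => a p.1 p.2) (fun p _ => ha p.1 p.2) fun p => ψ p.1 p.2

end WeightedIntegral

section Virial

variable {E V ι : Type*} [NormedAddCommGroup E] [NormedSpace ℝ E] [Fintype ι]
  [NormedAddCommGroup V] [InnerProductSpace ℝ V]

/-- The Laplacian `∑ k, ∂_{e k} ∂_{e k} f` attached to a finite family of directions, which need not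
be orthonormal. For the standard basis it is definitionally the usual coordinate Laplacian. -/
def dirLaplacian {G : Type*} [NormedAddCommGroup G] [NormedSpace ℝ G] (e : ι → E) (f : E → G)
    (x : E) : G :=
  ∑ k, fderiv ℝ (fun y => fderiv ℝ f y (e k)) x (e k)

/-- The divergence `∑ j, ∂_{e j} X_j` of the vector field with coefficients `X j` along the
directions `e j`. -/
def dirDivergence (e : ι → E) (X : ι → E → ℝ) (x : E) : ℝ :=
  ∑ j, fderiv ℝ (X j) x (e j)

theorem hasTemperateGrowth_dirDivergence (e : ι → E) {X : ι → E → ℝ}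
    (hX : ∀ j, (X j).HasTemperateGrowth) : (dirDivergence e X).HasTemperateGrowth :=
  .sum fun j _ => hasTemperateGrowth_fderiv_apply (hX j) (e j)

theorem hasTemperateGrowth_dirLaplacian (e : ι → E) {f : E → ℝ} (hf : f.HasTemperateGrowth) :
    (dirLaplacian e f).HasTemperateGrowth :=
  hasTemperateGrowth_dirDivergence e fun k => hasTemperateGrowth_fderiv_apply hf (e k)

theorem sum_lineDerivOp_lineDerivOp_apply {G : Type*} [NormedAddCommGroup G] [NormedSpace ℝ G]
    (e : ι → E) (φ : 𝓢(E, G)) (x : E) :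
    (∑ k, ∂_{e k} (∂_{e k} φ)) x = dirLaplacian e φ x := by
  rw [sum_apply]
  rfl

theorem momentumBracket_sum_left (v : E) (f : ι → 𝓢(E, V)) (g : 𝓢(E, V)) :
    momentumBracket v (∑ k, f k) g = ∑ k, momentumBracket v (f k) g := by
  simp [momentumBracket, lineDerivOp_sum]

theorem momentumBracket_sub_left (v : E) (f₁ f₂ g : 𝓢(E, V)) :
    momentumBracket v (f₁ - f₂) g = momentumBracket v f₁ g - momentumBracket v f₂ g := by
  simp only [momentumBracket, sub_eq_add_neg, map_add, map_neg, add_apply, neg_apply,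
    lineDerivOp_add, lineDerivOp_neg]
  abel

variable [FiniteDimensional ℝ E] [MeasurableSpace E] [BorelSpace E] (μ : Measure E)
  [μ.IsAddHaarMeasure] (e : ι → E) {X : ι → E → ℝ}

theorem weightedIntegral_lineDerivOp {a : E → ℝ} (ha : a.HasTemperateGrowth) (v : E)
    (ψ : 𝓢(E, ℝ)) :
    weightedIntegral μ a (∂_{v} ψ) = -weightedIntegral μ (fun x => fderiv ℝ a x v) ψ := by
  have ha' := hasTemperateGrowth_fderiv_apply ha v
  rw [weightedIntegral_apply μ ha, weightedIntegral_apply μ ha']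
  exact integral_mul_fderiv_eq_neg_fderiv_mul_of_integrable
    (integrable_mul_of_hasTemperateGrowth μ ha' ψ)
    (integrable_mul_of_hasTemperateGrowth μ ha (∂_{v} ψ))
    (integrable_mul_of_hasTemperateGrowth μ ha ψ)
    (fun x _ => ha.1.differentiable (by simp) x) fun x _ => ψ.differentiableAt

theorem weightedIntegral_dirLaplacian {a : E → ℝ} (ha : a.HasTemperateGrowth) (ψ : 𝓢(E, ℝ)) :
    weightedIntegral μ (dirLaplacian e a) ψ =
      ∑ k, weightedIntegral μ a (∂_{e k} (∂_{e k} ψ)) := by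
  have ha' (k : ι) := hasTemperateGrowth_fderiv_apply ha (e k)
  unfold dirLaplacian
  rw [weightedIntegral_sum μ fun k _ => hasTemperateGrowth_fderiv_apply (ha' k) (e k)]
  simp only [weightedIntegral_lineDerivOp μ ha, weightedIntegral_lineDerivOp μ (ha' _), neg_neg]

theorem weightedIntegral_dirDivergence (hX : ∀ j, (X j).HasTemperateGrowth) (ψ : 𝓢(E, ℝ)) :
    weightedIntegral μ (dirDivergence e X) ψ = -∑ j, weightedIntegral μ (X j) (∂_{e j} ψ) := by
  unfold dirDivergence
  rw [weightedIntegral_sum μ fun j _ => hasTemperateGrowth_fderiv_apply (hX j) (e j)]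
  simp only [weightedIntegral_lineDerivOp μ (hX _), Finset.sum_neg_distrib, neg_neg]

theorem two_mul_sum_weightedIntegral_momentumBracket (hX : ∀ j, (X j).HasTemperateGrowth)
    (φ : 𝓢(E, V)) :
    2 * ∑ j, weightedIntegral μ (X j) (momentumBracket (e j) (∑ k, ∂_{e k} (∂_{e k} φ)) φ) =
      weightedIntegral μ (dirLaplacian e (dirDivergence e X)) ⟪φ, φ⟫ -
        4 * ∑ j, ∑ k, weightedIntegral μ (fun x => fderiv ℝ (X k) x (e j))
          ⟪∂_{e j} φ, ∂_{e k} φ⟫ := by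
  have h_local (j k : ι) :
      2 * weightedIntegral μ (X j) (momentumBracket (e j) (∂_{e k} (∂_{e k} φ)) φ) =
        -(4 * weightedIntegral μ (fun x => fderiv ℝ (X j) x (e k)) ⟪∂_{e k} φ, ∂_{e j} φ⟫) -
          weightedIntegral μ (X j) (∂_{e j} (∂_{e k} (∂_{e k} ⟪φ, φ⟫))) := by
    rw [← smul_eq_mul, ← map_smul, two_smul_momentumBracket_lineDerivOp_lineDerivOp, map_sub,
      map_smul, weightedIntegral_lineDerivOp μ (hX j), pairing_inner_comm (∂_{e k} φ), smul_neg,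
      smul_eq_mul]
  have h_trace : weightedIntegral μ (dirLaplacian e (dirDivergence e X)) ⟪φ, φ⟫ =
      -∑ j, ∑ k, weightedIntegral μ (X j) (∂_{e j} (∂_{e k} (∂_{e k} ⟪φ, φ⟫))) := by
    rw [weightedIntegral_dirLaplacian μ e (hasTemperateGrowth_dirDivergence e hX)]
    simp only [weightedIntegral_dirDivergence μ e hX, Finset.sum_neg_distrib]
    rw [Finset.sum_comm]
  simp only [h_trace, momentumBracket_sum_left, map_sum, Finset.mul_sum, h_local,
    Finset.sum_sub_distrib, Finset.sum_neg_distrib]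
  rw [Finset.sum_comm (f := fun j k => 4 * weightedIntegral μ (fun x => fderiv ℝ (X j) x (e k)) _)]
  ring

end Virial

section TimeDerivative

variable {E G G₁ G₂ V : Type*} [NormedAddCommGroup E] [NormedSpace ℝ E]
  [NormedAddCommGroup G] [NormedSpace ℝ G]
  [NormedAddCommGroup G₁] [NormedSpace ℝ G₁] [NormedAddCommGroup G₂] [NormedSpace ℝ G₂]
  [NormedAddCommGroup V] [InnerProductSpace ℝ V]

theorem hasDerivAt_lineDerivOp {u u' : ℝ → 𝓢(E, G)}
    (hu : ContDiff ℝ 2 fun p : ℝ × E => u p.1 p.2)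
    (hu' : ∀ s x, HasDerivAt (fun r => u r x) (u' s x) s) (v : E) (s : ℝ) (x : E) :
    HasDerivAt (fun r => ∂_{v} (u r) x) (∂_{v} (u' s) x) s := by
  have h := hasDerivAt_fderiv_apply (u := fun r => ⇑(u r)) hu v s x
  simp only [(hu' _ _).deriv] at h
  exact h

theorem pairing_add_eq_momentumBracket {J : V →L[ℝ] V}
    (hJ : ∀ a b, inner ℝ (J a) b = -inner ℝ a (J b)) (v : E) (φ φ' : 𝓢(E, V)) :
    ⟪postcompCLM J φ, ∂_{v} φ'⟫ + ⟪postcompCLM J φ', ∂_{v} φ⟫ =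
      momentumBracket v (postcompCLM J φ') φ := by
  ext x
  have h_skew := hJ (φ x) (∂_{v} φ' x)
  simp only [momentumBracket, lineDerivOp_postcompCLM, add_apply, sub_apply, pairing_inner_apply,
    postcompCLM_apply, h_skew]
  ring

variable [MeasurableSpace E] [BorelSpace E] [SecondCountableTopology E] (μ : Measure E)
  [μ.HasTemperateGrowth]

theorem hasDerivAt_integral_of_seminorm_le {ψ ψ' : ℝ → 𝓢(E, G)} {t : ℝ} {N : Set ℝ}
    (hN : N ∈ 𝓝 t) (hψ : ∀ s ∈ N, ∀ x, HasDerivAt (fun r => ψ r x) (ψ' s x) s)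
    (hbound : ∀ k, ∃ C, ∀ s ∈ N, SchwartzMap.seminorm ℝ k 0 (ψ' s) ≤ C) :
    HasDerivAt (fun s => ∫ x, ψ s x ∂μ) (∫ x, ψ' t x ∂μ) t := by
  obtain ⟨C₀, hC₀⟩ := hbound 0
  obtain ⟨C₁, hC₁⟩ := hbound μ.integrablePower
  have h_dom (x : E) (s : ℝ) (hs : s ∈ N) : ‖ψ' s x‖ ≤
      2 ^ μ.integrablePower * (C₀ + C₁) * (1 + ‖x‖) ^ (-(μ.integrablePower : ℝ)) := by
    simpa using pow_mul_le_of_le_of_pow_mul_le (k := 0) (norm_nonneg x) (norm_nonneg (ψ' s x))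
      ((norm_le_seminorm ℝ (ψ' s) x).trans (hC₀ s hs))
      (by simpa using (norm_pow_mul_le_seminorm ℝ (ψ' s) _ x).trans (hC₁ s hs))
  exact (hasDerivAt_integral_of_dominated_loc_of_deriv_le hN
    (.of_forall fun s => (ψ s).integrable.aestronglyMeasurable) (ψ t).integrable
    (ψ' t).integrable.aestronglyMeasurable (.of_forall h_dom)
    ((Measure.integrable_pow_neg_integrablePower μ).const_mul _)
    (.of_forall fun x s hs => hψ s hs x)).2

theorem hasDerivAt_integral_pairing (B : G₁ →L[ℝ] G₂ →L[ℝ] G) {f f' : ℝ → 𝓢(E, G₁)}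
    {g g' : ℝ → 𝓢(E, G₂)} {t : ℝ} {N : Set ℝ} (hN : N ∈ 𝓝 t)
    (hf : ∀ s ∈ N, ∀ x, HasDerivAt (fun r => f r x) (f' s x) s)
    (hg : ∀ s ∈ N, ∀ x, HasDerivAt (fun r => g r x) (g' s x) s)
    (hf_bdd : Bornology.IsVonNBounded ℝ (f '' N)) (hf'_bdd : Bornology.IsVonNBounded ℝ (f' '' N))
    (hg_bdd : Bornology.IsVonNBounded ℝ (g '' N)) (hg'_bdd : Bornology.IsVonNBounded ℝ (g' '' N)) :
    HasDerivAt (fun s => ∫ x, pairing B (f s) (g s) x ∂μ)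
      (∫ x, (pairing B (f t) (g' t) + pairing B (f' t) (g t)) x ∂μ) t := by
  refine hasDerivAt_integral_of_seminorm_le μ hN (ψ := fun s => pairing B (f s) (g s))
    (ψ' := fun s => pairing B (f s) (g' s) + pairing B (f' s) (g s))
    (fun s hs x => B.hasDerivAt_of_bilinear (fun _ => hf s hs x) fun _ => hg s hs x) fun k => ?_
  obtain ⟨C₁, hC₁⟩ := exists_seminorm_pairing_le B hf_bdd hg'_bdd k
  obtain ⟨C₂, hC₂⟩ := exists_seminorm_pairing_le B hf'_bdd hg_bdd k
  exact ⟨C₁ + C₂, fun s hs => (map_add_le_add _ _ _).trans (add_le_add (hC₁ s hs) (hC₂ s hs))⟩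

theorem hasDerivAt_weightedIntegral_momentum {a : E → ℝ} (ha : a.HasTemperateGrowth)
    {J : V →L[ℝ] V} (hJ : ∀ a b, inner ℝ (J a) b = -inner ℝ a (J b)) {u u' : ℝ → 𝓢(E, V)}
    {t : ℝ} {N : Set ℝ} (hN : N ∈ 𝓝 t) (hu : ContDiff ℝ 2 fun p : ℝ × E => u p.1 p.2)
    (hu' : ∀ s x, HasDerivAt (fun r => u r x) (u' s x) s)
    (hu_bdd : Bornology.IsVonNBounded ℝ (u '' N)) (hu'_bdd : Bornology.IsVonNBounded ℝ (u' '' N))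
    (v : E) :
    HasDerivAt (fun s => weightedIntegral μ a ⟪postcompCLM J (u s), ∂_{v} (u s)⟫)
      (weightedIntegral μ a (momentumBracket v (postcompCLM J (u' t)) (u t))) t := by
  have h_weight (φ ψ : 𝓢(E, V)) :
      weightedIntegral μ a ⟪φ, ψ⟫ = ∫ x, ⟪φ, smulLeftCLM V a ψ⟫ x ∂μ := by
    simp [weightedIntegral_apply μ ha, smulLeftCLM_apply_apply ha]
  let T : 𝓢(E, V) →L[ℝ] 𝓢(E, V) := smulLeftCLM V a ∘L lineDerivOpCLM ℝ 𝓢(E, V) v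
  have h := hasDerivAt_integral_pairing μ (innerSL ℝ) (f := fun s => postcompCLM J (u s))
    (f' := fun s => postcompCLM J (u' s)) (g := fun s => T (u s)) (g' := fun s => T (u' s)) hN
    (fun s _ x => J.hasFDerivAt.comp_hasDerivAt s (hu' s x))
    (fun s _ x => by
      simpa [T, smulLeftCLM_apply_apply ha] using
        (hasDerivAt_lineDerivOp hu hu' v s x).fun_const_smul (a x))
    (isVonNBounded_image_comp (postcompCLM J) hu_bdd)
    (isVonNBounded_image_comp (postcompCLM J) hu'_bdd) (isVonNBounded_image_comp T hu_bdd)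
    (isVonNBounded_image_comp T hu'_bdd)
  rw [← pairing_add_eq_momentumBracket hJ, map_add]
  simp only [h_weight]
  rw [← integral_add (SchwartzMap.integrable _) (SchwartzMap.integrable _)]
  exact h

end TimeDerivative

section Complex

theorem inner_I_mul_left (z w : ℂ) :
    inner ℝ (ContinuousLinearMap.mul ℝ ℂ Complex.I z) w = (w * (starRingEnd ℂ) z).im := by
  simp only [ContinuousLinearMap.mul_apply', Complex.inner, map_mul, Complex.conj_I, Complex.mul_re,
    Complex.mul_im, Complex.neg_re, Complex.neg_im, Complex.conj_re, Complex.conj_im, Complex.I_re,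
    Complex.I_im]
  ring

theorem re_mul_conj (z w : ℂ) : (z * (starRingEnd ℂ) w).re = inner ℝ z w :=
  real_inner_comm z w

theorem re_conj_mul (z w : ℂ) : ((starRingEnd ℂ) z * w).re = inner ℝ z w := by
  rw [mul_comm, Complex.inner]

theorem inner_I_mul_skew (z w : ℂ) :
    inner ℝ (ContinuousLinearMap.mul ℝ ℂ Complex.I z) w =
      -inner ℝ z (ContinuousLinearMap.mul ℝ ℂ Complex.I w) := by
  simp only [ContinuousLinearMap.mul_apply', Complex.inner, map_mul, Complex.conj_I, Complex.mul_re,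
    Complex.mul_im, Complex.neg_re, Complex.neg_im, Complex.conj_re, Complex.conj_im, Complex.I_re,
    Complex.I_im]
  ring

variable {E ι : Type*} [NormedAddCommGroup E] [NormedSpace ℝ E] [Fintype ι]
  [MeasurableSpace E] [BorelSpace E] [SecondCountableTopology E] (μ : Measure E)
  [μ.HasTemperateGrowth]

theorem im_integral_momentum (e : ι → E) {X : ι → E → ℝ} (hX : ∀ j, (X j).HasTemperateGrowth)
    (φ : 𝓢(E, ℂ)) :
    (∫ x, (∑ j, (X j x : ℂ) * ∂_{e j} φ x) * (starRingEnd ℂ) (φ x) ∂μ).im =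
      ∫ x, ∑ j, X j x *
        inner ℝ (ContinuousLinearMap.mul ℝ ℂ Complex.I (φ x)) (∂_{e j} φ x) ∂μ := by
  have h_int : Integrable
      (fun x => (∑ j, (X j x : ℂ) * ∂_{e j} φ x) * (starRingEnd ℂ) (φ x)) μ := by
    refine (pairing (ContinuousLinearMap.mul ℝ ℂ) (∑ j, smulLeftCLM ℂ (X j) (∂_{e j} φ))
      (postcompCLM Complex.conjCLE.toContinuousLinearMap φ)).integrable.congr
        (.of_forall fun x => ?_)
    rw [pairing_apply_apply, sum_apply]
    simp [smulLeftCLM_apply_apply (hX _), Finset.sum_mul]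
  refine (integral_im h_int).symm.trans (integral_congr_ae (.of_forall fun x => ?_))
  simp only [inner_I_mul_left, Finset.sum_mul, mul_assoc, RCLike.im_to_complex, Complex.im_sum,
    Complex.im_ofReal_mul]

end Complex

section Dynamics

variable {E V ι : Type*} [NormedAddCommGroup E] [NormedSpace ℝ E] [FiniteDimensional ℝ E]
  [MeasurableSpace E] [BorelSpace E] (μ : Measure E) [μ.IsAddHaarMeasure]
  [NormedAddCommGroup V] [InnerProductSpace ℝ V] [Fintype ι]

theorem hasDerivAt_two_mul_sum_weightedIntegral_momentum (e : ι → E) {X : ι → E → ℝ}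
    (hX : ∀ j, (X j).HasTemperateGrowth)
    {J : V →L[ℝ] V} (hJ : ∀ a b, inner ℝ (J a) b = -inner ℝ a (J b))
    {u u' : ℝ → 𝓢(E, V)} {F : 𝓢(E, V)} {t : ℝ} {N : Set ℝ} (hN : N ∈ 𝓝 t)
    (hu : ContDiff ℝ 2 fun p : ℝ × E => u p.1 p.2)
    (hu' : ∀ s x, HasDerivAt (fun r => u r x) (u' s x) s)
    (hu_bdd : Bornology.IsVonNBounded ℝ (u '' N)) (hu'_bdd : Bornology.IsVonNBounded ℝ (u' '' N))
    (heq : ∀ x, J (u' t x) + dirLaplacian e (u t) x = F x) :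
    HasDerivAt
      (fun s => 2 * ∑ j, weightedIntegral μ (X j) ⟪postcompCLM J (u s), ∂_{e j} (u s)⟫)
      (-weightedIntegral μ (dirLaplacian e (dirDivergence e X)) ⟪u t, u t⟫
        + 4 * ∑ j, ∑ k, weightedIntegral μ (fun x => fderiv ℝ (X k) x (e j))
            ⟪∂_{e j} (u t), ∂_{e k} (u t)⟫
        + 2 * ∑ j, weightedIntegral μ (X j) (momentumBracket (e j) F (u t))) t := by
  have h_flux (j : ι) : momentumBracket (e j) (postcompCLM J (u' t)) (u t) =
      momentumBracket (e j) F (u t) -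
        momentumBracket (e j) (∑ k, ∂_{e k} (∂_{e k} (u t))) (u t) := by
    have : postcompCLM J (u' t) = F - ∑ k, ∂_{e k} (∂_{e k} (u t)) := by
      ext x
      rw [sub_apply, sum_lineDerivOp_lineDerivOp_apply]
      exact eq_sub_of_add_eq (heq x)
    rw [this, momentumBracket_sub_left]
  have h_deriv := (HasDerivAt.fun_sum fun j (_ : j ∈ Finset.univ) =>
    hasDerivAt_weightedIntegral_momentum μ (hX j) hJ hN hu hu' hu_bdd hu'_bdd (e j)).const_mul 2
  simp only [h_flux, map_sub, Finset.sum_sub_distrib, mul_sub,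
    two_mul_sum_weightedIntegral_momentumBracket μ e hX] at h_deriv
  exact h_deriv.congr_deriv (by ring)

theorem hasDerivAt_two_mul_integral_momentum (e : ι → E) {X : ι → E → ℝ}
    (hX : ∀ j, (X j).HasTemperateGrowth)
    {J : V →L[ℝ] V} (hJ : ∀ a b, inner ℝ (J a) b = -inner ℝ a (J b))
    {u u' : ℝ → 𝓢(E, V)} {F : 𝓢(E, V)} {t : ℝ} {N : Set ℝ} (hN : N ∈ 𝓝 t)
    (hu : ContDiff ℝ 2 fun p : ℝ × E => u p.1 p.2)
    (hu' : ∀ s x, HasDerivAt (fun r => u r x) (u' s x) s)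
    (hu_bdd : Bornology.IsVonNBounded ℝ (u '' N)) (hu'_bdd : Bornology.IsVonNBounded ℝ (u' '' N))
    (heq : ∀ x, J (u' t x) + dirLaplacian e (u t) x = F x) :
    HasDerivAt (fun s => 2 * ∫ x, ∑ j, X j x * inner ℝ (J (u s x)) (∂_{e j} (u s) x) ∂μ)
      ((∫ x, -dirLaplacian e (dirDivergence e X) x * ‖u t x‖ ^ 2 ∂μ)
        + 4 * (∫ x, ∑ j, ∑ k, fderiv ℝ (X k) x (e j) *
            inner ℝ (∂_{e j} (u t) x) (∂_{e k} (u t) x) ∂μ)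
        + 2 * ∫ x, ∑ j, X j x *
            (inner ℝ (F x) (∂_{e j} (u t) x) - inner ℝ (u t x) (∂_{e j} F x)) ∂μ) t := by
  have h_momentum (s : ℝ) : ∫ x, ∑ j, X j x * inner ℝ (J (u s x)) (∂_{e j} (u s) x) ∂μ = _ :=
    integral_sum_mul μ (fun j _ => hX j) fun j => ⟪postcompCLM J (u s), ∂_{e j} (u s)⟫
  have h_laplacian : ∫ x, -dirLaplacian e (dirDivergence e X) x * ‖u t x‖ ^ 2 ∂μ =
      -weightedIntegral μ (dirLaplacian e (dirDivergence e X)) ⟪u t, u t⟫ := by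
    have h_growth := hasTemperateGrowth_dirLaplacian e (hasTemperateGrowth_dirDivergence e hX)
    simp only [weightedIntegral_apply μ h_growth, pairing_inner_apply, real_inner_self_eq_norm_sq,
      neg_mul, integral_neg]
  have h_hessian : ∫ x, ∑ j, ∑ k, fderiv ℝ (X k) x (e j) *
        inner ℝ (∂_{e j} (u t) x) (∂_{e k} (u t) x) ∂μ = _ :=
    integral_sum_sum_mul μ (fun j k => hasTemperateGrowth_fderiv_apply (hX k) (e j))
      fun j k => ⟪∂_{e j} (u t), ∂_{e k} (u t)⟫
  have h_source : ∫ x, ∑ j, X j x *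
        (inner ℝ (F x) (∂_{e j} (u t) x) - inner ℝ (u t x) (∂_{e j} F x)) ∂μ = _ :=
    integral_sum_mul μ (fun j _ => hX j) fun j => momentumBracket (e j) F (u t)
  simpa only [h_momentum, h_laplacian, h_hessian, h_source] using
    hasDerivAt_two_mul_sum_weightedIntegral_momentum μ e hX hJ hN hu hu' hu_bdd hu'_bdd heq

end Dynamics

end Morawetz

open Morawetz

theorem morawetz_identity_general {E ι : Type*} [NormedAddCommGroup E] [NormedSpace ℝ E]
    [FiniteDimensional ℝ E] [MeasurableSpace E] [BorelSpace E] (μ : Measure E)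
    [μ.IsAddHaarMeasure] [Fintype ι] (e : ι → E) {X : ι → E → ℝ}
    (hX : ∀ j, (X j).HasTemperateGrowth) {u : ℝ → E → ℂ} {F : E → ℂ} {t : ℝ} {N : Set ℝ}
    (hN : N ∈ 𝓝 t) (hu : ContDiff ℝ 2 (Function.uncurry u))
    (hu_schwartz : ∀ s, ∃ f : 𝓢(E, ℂ), ∀ x, f x = u s x)
    (hut_schwartz : ∀ s, ∃ f : 𝓢(E, ℂ), ∀ x, f x = deriv (fun r => u r x) s)
    (hF_schwartz : ∃ f : 𝓢(E, ℂ), ∀ x, f x = F x)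
    (hbound : ∀ k n : ℕ, ∃ C : ℝ, ∀ s ∈ N, ∀ x,
      ‖x‖ ^ k * ‖iteratedFDeriv ℝ n (u s) x‖
        + ‖x‖ ^ k * ‖iteratedFDeriv ℝ n (fun y => deriv (fun r => u r y) s) x‖ ≤ C)
    (heq : ∀ x, Complex.I * deriv (fun s => u s x) t + dirLaplacian e (u t) x = F x) :
    HasDerivAt
      (fun s => 2 * (∫ x, (∑ j, (X j x : ℂ) * fderiv ℝ (u s) x (e j))
          * (starRingEnd ℂ) (u s x) ∂μ).im)
      ((∫ x, -dirLaplacian e (dirDivergence e X) x * ‖u t x‖ ^ 2 ∂μ)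
        + 4 * (∫ x, ∑ j, ∑ k, fderiv ℝ (X k) x (e j) *
            ((starRingEnd ℂ) (fderiv ℝ (u t) x (e j)) * fderiv ℝ (u t) x (e k)).re ∂μ)
        + 2 * ∫ x, ∑ j, X j x * (F x * (starRingEnd ℂ) (fderiv ℝ (u t) x (e j))
            - u t x * (starRingEnd ℂ) (fderiv ℝ F x (e j))).re ∂μ) t := by
  choose U hU using hu_schwartz
  choose U' hU' using hut_schwartz
  obtain ⟨Φ, hΦ⟩ := hF_schwartz
  obtain rfl : (fun s => ⇑(U s)) = u := funext₂ hU
  obtain rfl : ⇑Φ = F := funext hΦ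
  have h_time (s : ℝ) (x : E) : HasDerivAt (fun r => U r x) (U' s x) s := by
    rw [hU']
    exact ((hu.comp (contDiff_prodMk_left x)).differentiable two_ne_zero s).hasDerivAt
  have hU_bdd := isVonNBounded_image_of_decay_le (f := U) fun k n =>
    (hbound k n).imp fun C hC s hs x =>
      (le_add_of_nonneg_right (by positivity)).trans (hC s hs x)
  have hU'_bdd := isVonNBounded_image_of_decay_le (f := U') fun k n =>
    (hbound k n).imp fun C hC s hs x => by
      rw [funext (hU' s)]
      exact (le_add_of_nonneg_left (by positivity)).trans (hC s hs x)
  have h := hasDerivAt_two_mul_integral_momentum μ e hX inner_I_mul_skew hN hu h_time hU_bdd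
    hU'_bdd (F := Φ) fun x => by rw [hU']; exact heq x
  simp only [← im_integral_momentum μ e hX] at h
  simp only [Complex.sub_re, re_mul_conj, re_conj_mul]
  exact h

/-- **Morawetz identity.** If `i∂ₜu + Δu = F` with `u(t,·)`, `∂ₜu(t,·)`, `F(t,·)`
Schwartz (locally uniformly in `t`) and `w : ℝ³ → ℝ` smooth with polynomially
bounded derivatives of all orders `≥ 1`, then with
`M_w(t) = 2 Im ∫ ∇w·∇u conj(u) dx` one has
`(d/dt) M_w(t) = ∫ (−ΔΔw)|u|² + 4 ∫ ∂_j∂_k w Re(∂_j conj(u) ∂_k u)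
  + 2 ∫ ∂_j w {F,u}_P^j`. -/
theorem morawetz_identity (u F : ℝ → E3 → ℂ)
    (hu_smooth : ContDiff ℝ (⊤ : ℕ∞) (Function.uncurry u))
    (hF_smooth : ContDiff ℝ (⊤ : ℕ∞) (Function.uncurry F))
    (hu_schwartz : ∀ t : ℝ, ∃ f : SchwartzMap E3 ℂ, ∀ x : E3, f x = u t x)
    (hut_schwartz : ∀ t : ℝ, ∃ f : SchwartzMap E3 ℂ, ∀ x : E3,
        f x = deriv (fun s => u s x) t)
    (hF_schwartz : ∀ t : ℝ, ∃ f : SchwartzMap E3 ℂ, ∀ x : E3, f x = F t x)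
    (hbound : ∀ (k n : ℕ) (T : ℝ), 0 < T → ∃ C : ℝ, ∀ t ∈ Set.Icc (-T) T, ∀ x : E3,
        ‖x‖ ^ k * ‖iteratedFDeriv ℝ n (u t) x‖
          + ‖x‖ ^ k * ‖iteratedFDeriv ℝ n (fun y => deriv (fun s => u s y) t) x‖
          + ‖x‖ ^ k * ‖iteratedFDeriv ℝ n (F t) x‖ ≤ C)
    (heq : ∀ (t : ℝ) (x : E3),
        Complex.I * deriv (fun s => u s x) t + lap (u t) x = F t x)
    (w : E3 → ℝ) (hw : ContDiff ℝ (⊤ : ℕ∞) w)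
    (hwpoly : ∀ n : ℕ, 1 ≤ n → ∃ C : ℝ, ∃ m : ℕ, ∀ x : E3,
        ‖iteratedFDeriv ℝ n w x‖ ≤ C * (1 + ‖x‖) ^ m)
    (t : ℝ) :
    HasDerivAt
      (fun s => 2 * (∫ x : E3,
          (∑ j : Fin 3, ((pdR j w x : ℝ) : ℂ) * pd j (u s) x)
            * (starRingEnd ℂ) (u s x)).im)
      ((∫ x : E3, (-(lapR (lapR w) x)) * ‖u t x‖ ^ 2)
        + 4 * (∫ x : E3, ∑ j : Fin 3, ∑ k : Fin 3,
            pdR2 j k w x * ((starRingEnd ℂ) (pd j (u t) x) * pd k (u t) x).re)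
        + 2 * ∫ x : E3, ∑ j : Fin 3,
            pdR j w x * (F t x * (starRingEnd ℂ) (pd j (u t) x)
              - u t x * (starRingEnd ℂ) (pd j (F t) x)).re) t := by
  exact morawetz_identity_general volume e3
    (fun j => hasTemperateGrowth_fderiv_apply_of_bound hw hwpoly (e3 j))
    (Icc_mem_nhds (by linarith [neg_abs_le t]) (by linarith [le_abs_self t]))
    (contDiff_infty.1 hu_smooth 2) hu_schwartz hut_schwartz (hF_schwartz t)
    (fun k n => (hbound k n (|t| + 1) (by positivity)).imp fun C hC s hs x =>
      (le_add_of_nonneg_right (by positivity)).trans (hC s hs x))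
    (heq t)
end
end

section
/- (Virial identity for INLS with general weight) Let u be a smooth Schwartz solution of (INLS) and let w : ℝ³ → ℝ be smooth with all derivatives of order ≥ 1 polynomially bounded. Define V(t;w) = 2 Im ∫_{ℝ³} conj(u(t,x)) ∇w(x) · ∇u(t,x) dx. Then for every t, (d/dt) V(t;w) = ∫_{ℝ³} [ (−ΔΔw)(x) |u|² + 4 ∂_j∂_k w(x) Re( ∂_j conj(u) ∂_k u ) + 4a (x·∇w(x)/|x|⁴) |u|² ] dx + λ b ∫_{ℝ³} (x·∇w(x)/|x|^{2+b}) |u|⁴ dx + λ ∫_{ℝ³} Δw(x) |u|⁴/|x|^b dx, where all functions of u are evaluated at (t,x) and repeated indices j,k ∈ {1,2,3} are summed. -/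
open MeasureTheory Real Filter
open scoped BigOperators Topology

noncomputable section

/-!
Write `p = i ∂ₜu`. Differentiating under the integral and integrating by parts once, using that
multiplication by `i` is skew, gives `V' = 2 ∫ (2 ∇w · Re (conj p ∇u) + Δw Re (conj p u))`. The
equation replaces `p` by `N u - Δu` with `N = a |x|⁻² + λ |x|⁻ᵇ |u|²`. The `Δu` part is the
Morawetz computation and produces the bi-Laplacian and Hessian terms. In the `N u` part the
integrand is `N div (|u|² ∇w)`, which is integrated by parts against the homogeneous
kernels `|x|⁻ˢ` by means of the smooth kernels `(|x|² + ε) ^ (-s / 2)`.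

For the inverse-square term the integration by parts needs `|x|⁻³ |u|² |∇w|` to be integrable,
although `3` is the dimension. The equation provides this decay at the origin: away from `0` it
expresses `a |x|⁻² u` as a Schwartz function minus `λ |x|⁻ᵇ |u|² u`.
-/

open scoped InnerProductSpace SchwartzMap LineDeriv ContDiff ComplexConjugate

section Schwartz

variable {E F : Type*} [NormedAddCommGroup E] [NormedSpace ℝ E]
  [NormedAddCommGroup F] [NormedSpace ℝ F]

/-- The derivative of `f` in the direction `v`, as a function of the base point, so that
iterated directional derivatives are iterated applications; `pd j` and `pdR j` are the
instances with `v = e3 j`. -/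
def dirDeriv (v : E) (f : E → F) (x : E) : F := fderiv ℝ f x v

theorem contDiff_dirDeriv {f : E → F} (hf : ContDiff ℝ ∞ f) (v : E) :
    ContDiff ℝ ∞ (dirDeriv v f) :=
  (hf.fderiv_right (by simp)).clm_apply contDiff_const

theorem dirDeriv_comm {f : E → F} (hf : ContDiff ℝ ∞ f) (v v' : E) (x : E) :
    dirDeriv v (dirDeriv v' f) x = dirDeriv v' (dirDeriv v f) x := by
  have hd : DifferentiableAt ℝ (fderiv ℝ f) x :=
    (hf.fderiv_right (m := 1) (by norm_cast)).differentiable one_ne_zero x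
  have dirDeriv_dirDeriv (y y' : E) :
      dirDeriv y (dirDeriv y' f) x = fderiv ℝ (fderiv ℝ f) x y y' := by
    change fderiv ℝ (fun z => fderiv ℝ f z y') x y = _
    rw [fderiv_clm_apply hd (differentiableAt_const _)]
    simp
  rw [dirDeriv_dirDeriv, dirDeriv_dirDeriv]
  exact ((contDiff_infty.1 hf 2).contDiffAt.isSymmSndFDerivAt (by simp)).eq v v'

theorem hasTemperateGrowth_dirDeriv_of_bound {f : E → F} (hf : ContDiff ℝ ∞ f)
    (hbound : ∀ n : ℕ, 1 ≤ n → ∃ C : ℝ, ∃ m : ℕ, ∀ x : E,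
      ‖iteratedFDeriv ℝ n f x‖ ≤ C * (1 + ‖x‖) ^ m) (v : E) :
    (dirDeriv v f).HasTemperateGrowth := by
  have hfderiv : (fderiv ℝ f).HasTemperateGrowth := by
    refine ⟨hf.fderiv_right (by simp), fun n => ?_⟩
    obtain ⟨C, m, h⟩ := hbound (n + 1) (Nat.le_add_left 1 n)
    exact ⟨m, C, fun x => norm_iteratedFDeriv_fderiv (𝕜 := ℝ) (f := f) ▸ h x⟩
  exact (ContinuousLinearMap.apply ℝ F v).hasTemperateGrowth.comp hfderiv

theorem hasTemperateGrowth_dirDeriv {f : E → F} (hf : f.HasTemperateGrowth) (v : E) :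
    (dirDeriv v f).HasTemperateGrowth :=
  hasTemperateGrowth_dirDeriv_of_bound hf.1
    (fun n _ => let ⟨m, C, h⟩ := hf.2 n; ⟨C, m, h⟩) v

theorem dirDeriv_mul {f g : E → ℝ} {x : E} (hf : DifferentiableAt ℝ f x)
    (hg : DifferentiableAt ℝ g x) (v : E) :
    dirDeriv v (fun y => f y * g y) x = f x * dirDeriv v g x + dirDeriv v f x * g x := by
  simp [dirDeriv, fderiv_fun_mul hf hg, mul_comm]

theorem dirDeriv_inner {F : Type*} [NormedAddCommGroup F] [InnerProductSpace ℝ F]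
    {f g : E → F} {x : E} (hf : DifferentiableAt ℝ f x) (hg : DifferentiableAt ℝ g x) (v : E) :
    dirDeriv v (fun y => ⟪f y, g y⟫_ℝ) x = ⟪f x, dirDeriv v g x⟫_ℝ + ⟪dirDeriv v f x, g x⟫_ℝ :=
  fderiv_inner_apply ℝ hf hg v

theorem dirDeriv_norm_sq {F : Type*} [NormedAddCommGroup F] [InnerProductSpace ℝ F]
    {f : E → F} {x : E} (hf : DifferentiableAt ℝ f x) (v : E) :
    dirDeriv v (fun y => ‖f y‖ ^ 2) x = 2 * ⟪dirDeriv v f x, f x⟫_ℝ := by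
  simp only [← real_inner_self_eq_norm_sq]
  rw [dirDeriv_inner hf hf, real_inner_comm, two_mul]

/-- `f` is the underlying function of a Schwartz map. -/
def IsSchwartz (f : E → F) : Prop := ∃ g : 𝓢(E, F), ⇑g = f

namespace IsSchwartz

variable {f g : E → F}

theorem add (hf : IsSchwartz f) (hg : IsSchwartz g) : IsSchwartz fun x => f x + g x := by
  obtain ⟨f, rfl⟩ := hf
  obtain ⟨g, rfl⟩ := hg
  exact ⟨f + g, rfl⟩

theorem sum {ι : Type*} {f : ι → E → F} {s : Finset ι} (hf : ∀ i ∈ s, IsSchwartz (f i)) :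
    IsSchwartz fun x => ∑ i ∈ s, f i x := by
  choose! g hg using hf
  exact ⟨∑ i ∈ s, g i, funext fun x => by
    simpa using Finset.sum_congr rfl fun i hi => congrFun (hg i hi) x⟩

theorem clm_comp {G : Type*} [NormedAddCommGroup G] [NormedSpace ℝ G] (L : F →L[ℝ] G)
    (hf : IsSchwartz f) : IsSchwartz fun x => L (f x) := by
  obtain ⟨f, rfl⟩ := hf
  exact ⟨f.postcompCLM L, rfl⟩

theorem smul {c : E → ℝ} (hf : IsSchwartz f) (hc : c.HasTemperateGrowth) :
    IsSchwartz fun x => c x • f x := by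
  obtain ⟨f, rfl⟩ := hf
  exact ⟨SchwartzMap.smulLeftCLM F c f, funext (SchwartzMap.smulLeftCLM_apply_apply hc f)⟩

theorem dirDeriv (hf : IsSchwartz f) (v : E) : IsSchwartz (dirDeriv v f) := by
  obtain ⟨f, rfl⟩ := hf
  exact ⟨∂_{v} f, funext fun x => SchwartzMap.lineDerivOp_apply_eq_fderiv ..⟩

theorem hasTemperateGrowth (hf : IsSchwartz f) : f.HasTemperateGrowth := by
  obtain ⟨f, rfl⟩ := hf
  exact f.hasTemperateGrowth

theorem contDiff (hf : IsSchwartz f) : ContDiff ℝ ∞ f := hf.hasTemperateGrowth.1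

theorem differentiable (hf : IsSchwartz f) : Differentiable ℝ f :=
  hf.contDiff.differentiable (by simp)

theorem mul {f g : E → ℝ} (hg : IsSchwartz g) (hf : f.HasTemperateGrowth) :
    IsSchwartz fun x => f x * g x :=
  hg.smul hf

theorem bilin {G H : Type*} [NormedAddCommGroup G] [NormedSpace ℝ G] [NormedAddCommGroup H]
    [NormedSpace ℝ H] {g : E → G} (hf : IsSchwartz f) (B : F →L[ℝ] G →L[ℝ] H)
    (hg : g.HasTemperateGrowth) : IsSchwartz fun x => B (f x) (g x) := by
  obtain ⟨f, rfl⟩ := hf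
  exact ⟨SchwartzMap.bilinLeftCLM B hg f, rfl⟩

theorem inner {F : Type*} [NormedAddCommGroup F] [InnerProductSpace ℝ F] {f g : E → F}
    (hf : IsSchwartz f) (hg : IsSchwartz g) : IsSchwartz fun x => ⟪f x, g x⟫_ℝ :=
  hf.bilin (innerSL ℝ) hg.hasTemperateGrowth

theorem norm_sq {F : Type*} [NormedAddCommGroup F] [InnerProductSpace ℝ F] {f : E → F}
    (hf : IsSchwartz f) : IsSchwartz fun x => ‖f x‖ ^ 2 := by
  simpa only [real_inner_self_eq_norm_sq] using hf.inner hf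

theorem norm_le (hf : IsSchwartz f) : ∃ C, ∀ x, ‖f x‖ ≤ C := by
  obtain ⟨f, rfl⟩ := hf
  exact ⟨_, f.norm_le_seminorm ℝ⟩

end IsSchwartz

end Schwartz

section IntegrationByParts

variable {E F : Type*} [NormedAddCommGroup E] [NormedSpace ℝ E] [FiniteDimensional ℝ E]
  [MeasurableSpace E] [BorelSpace E] {μ : Measure E} [μ.IsAddHaarMeasure]
  [NormedAddCommGroup F]

theorem IsSchwartz.integrable [NormedSpace ℝ F] {f : E → F} (hf : IsSchwartz f) :
    Integrable f μ := by
  obtain ⟨f, rfl⟩ := hf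
  exact f.integrable

theorem integral_finsetSum_finsetSum [NormedSpace ℝ F] {α ι κ : Type*} [MeasurableSpace α]
    {ν : Measure α} {s : Finset ι} {t : Finset κ} {f : ι → κ → α → F}
    (hf : ∀ i ∈ s, ∀ j ∈ t, Integrable (f i j) ν) :
    ∫ x, ∑ i ∈ s, ∑ j ∈ t, f i j x ∂ν = ∑ i ∈ s, ∑ j ∈ t, ∫ x, f i j x ∂ν := by
  rw [integral_finsetSum _ fun i hi => integrable_finsetSum _ (hf i hi)]
  exact Finset.sum_congr rfl fun i hi => integral_finsetSum _ (hf i hi)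

theorem integral_mul_dirDeriv_eq_neg {g h : E → ℝ} (hg : g.HasTemperateGrowth)
    (hh : IsSchwartz h) (v : E) :
    ∫ x, g x * dirDeriv v h x ∂μ = -∫ x, dirDeriv v g x * h x ∂μ :=
  integral_mul_fderiv_eq_neg_fderiv_mul_of_integrable
    (hh.mul (hasTemperateGrowth_dirDeriv hg v)).integrable ((hh.dirDeriv v).mul hg).integrable
    (hh.mul hg).integrable (fun x _ => hg.1.differentiable (by simp) x)
    (fun x _ => hh.differentiable x)

variable [InnerProductSpace ℝ F] {g : E → ℝ} {u : E → F}

theorem integral_mul_inner_skew_dirDeriv {v : E → F} {J : F →L[ℝ] F}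
    (hJ : ∀ y z, ⟪J y, z⟫_ℝ = -⟪y, J z⟫_ℝ) (hg : g.HasTemperateGrowth) (hu : IsSchwartz u)
    (hv : IsSchwartz v) (e : E) :
    ∫ x, g x * ⟪J (u x), dirDeriv e v x⟫_ℝ ∂μ =
      ∫ x, g x * ⟪J (v x), dirDeriv e u x⟫_ℝ ∂μ + ∫ x, dirDeriv e g x * ⟪J (v x), u x⟫_ℝ ∂μ := by
  have hJv := hv.clm_comp J
  have hdir (x : E) : dirDeriv e (fun y => ⟪J (v y), u y⟫_ℝ) x =
      ⟪J (v x), dirDeriv e u x⟫_ℝ - ⟪J (u x), dirDeriv e v x⟫_ℝ := by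
    have hdirJ : dirDeriv e (fun y => J (v y)) x = J (dirDeriv e v x) :=
      DFunLike.congr_fun (J.hasFDerivAt.comp x (hv.differentiable x).hasFDerivAt).fderiv e
    rw [dirDeriv_inner (hJv.differentiable x) (hu.differentiable x), hdirJ, hJ (dirDeriv e v x),
      real_inner_comm (J (u x)), sub_eq_add_neg]
  have hparts := integral_mul_dirDeriv_eq_neg (μ := μ) hg (hJv.inner hu) e
  simp only [hdir, mul_sub] at hparts
  rw [integral_sub ((hJv.inner (hu.dirDeriv e)).mul hg).integrable
    (((hu.clm_comp J).inner (hv.dirDeriv e)).mul hg).integrable] at hparts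
  linarith

theorem integral_mul_inner_dirDeriv_self (hg : g.HasTemperateGrowth) (hu : IsSchwartz u) (v : E) :
    ∫ x, g x * ⟪dirDeriv v u x, u x⟫_ℝ ∂μ = -(∫ x, dirDeriv v g x * ‖u x‖ ^ 2 ∂μ) / 2 := by
  rw [← integral_mul_dirDeriv_eq_neg hg hu.norm_sq, ← integral_div]
  refine integral_congr_ae (ae_of_all _ fun x => ?_)
  simp only [dirDeriv_norm_sq (hu.differentiable x)]
  ring

theorem integral_mul_inner_dirDeriv_dirDeriv_self (hg : g.HasTemperateGrowth)
    (hu : IsSchwartz u) (v : E) :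
    ∫ x, g x * ⟪dirDeriv v (dirDeriv v u) x, u x⟫_ℝ ∂μ =
      (∫ x, dirDeriv v (dirDeriv v g) x * ‖u x‖ ^ 2 ∂μ) / 2
        - ∫ x, g x * ‖dirDeriv v u x‖ ^ 2 ∂μ := by
  have hu' := hu.dirDeriv v
  have hparts := integral_mul_dirDeriv_eq_neg (μ := μ) hg (hu'.inner hu) v
  simp only [dirDeriv_inner (hu'.differentiable _) (hu.differentiable _),
    real_inner_self_eq_norm_sq, mul_add] at hparts
  rw [integral_add (hu'.norm_sq.mul hg).integrable
      (((hu'.dirDeriv v).inner hu).mul hg).integrable,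
    integral_mul_inner_dirDeriv_self (hasTemperateGrowth_dirDeriv hg v) hu] at hparts
  linarith

theorem integral_mul_inner_dirDeriv_dirDeriv (hg : g.HasTemperateGrowth)
    (hu : IsSchwartz u) (v v' : E) :
    ∫ x, g x * ⟪dirDeriv v (dirDeriv v u) x, dirDeriv v' u x⟫_ℝ ∂μ =
      (∫ x, dirDeriv v' g x * ‖dirDeriv v u x‖ ^ 2 ∂μ) / 2
        - ∫ x, dirDeriv v g x * ⟪dirDeriv v u x, dirDeriv v' u x⟫_ℝ ∂μ := by
  have hu₁ := hu.dirDeriv v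
  have hu₂ := hu.dirDeriv v'
  have hparts := integral_mul_dirDeriv_eq_neg (μ := μ) hg (hu₁.inner hu₂) v
  simp only [dirDeriv_inner (hu₁.differentiable _) (hu₂.differentiable _),
    dirDeriv_comm hu.contDiff v v', real_inner_comm (dirDeriv v' (dirDeriv v u) _),
    mul_add] at hparts
  rw [integral_add (((hu₁.dirDeriv v').inner hu₁).mul hg).integrable
      (((hu₁.dirDeriv v).inner hu₂).mul hg).integrable,
    integral_mul_inner_dirDeriv_self hg hu₁] at hparts
  linarith

end IntegrationByParts

section SingularKernel

variable {E : Type*} [NormedAddCommGroup E] [NormedSpace ℝ E] [FiniteDimensional ℝ E]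
  [MeasurableSpace E] [BorelSpace E] {μ : Measure E} [μ.IsAddHaarMeasure]

theorem ae_norm_pos [Nontrivial E] : ∀ᵐ x ∂μ, 0 < ‖x‖ := by
  have hnull : μ {0} = 0 := measure_singleton 0
  filter_upwards [compl_mem_ae_iff.2 hnull] with x hx
  exact norm_pos_iff.2 hx

theorem integrable_norm_rpow_neg_mul {f : E → ℝ} {C s : ℝ} (hf : Integrable f μ)
    (hC : ∀ x, ‖f x‖ ≤ C) (hs0 : 0 ≤ s) (hs : s < Module.finrank ℝ E) :
    Integrable (fun x => ‖x‖ ^ (-s) * f x) μ := by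
  have hmeas : AEStronglyMeasurable (fun x => ‖x‖ ^ (-s) * f x) μ :=
    (measurable_norm.pow_const _).aestronglyMeasurable.mul hf.1
  have hnear : IntegrableOn (fun x => ‖x‖ ^ (-s) * f x) (Metric.ball 0 1) μ := by
    refine integrableOn_ball_of_norm_le_rpow (C := C) (α := s)
      (mod_cast hs0.trans_lt hs) hs (ae_of_all _ fun x => ?_) hmeas
    rw [norm_mul, mul_comm, norm_of_nonneg (rpow_nonneg (norm_nonneg x) _)]
    exact mul_le_mul_of_nonneg_right (hC x) (by positivity)
  have hfar : IntegrableOn (fun x => ‖x‖ ^ (-s) * f x) (Metric.ball 0 1)ᶜ μ := by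
    refine hf.norm.integrableOn.mono' hmeas.restrict
      ((ae_restrict_iff' measurableSet_ball.compl).2 (ae_of_all _ fun x hx => ?_))
    rw [norm_mul, norm_of_nonneg (by positivity)]
    exact mul_le_of_le_one_left (norm_nonneg _)
      (rpow_le_one_of_one_le_of_nonpos (by simpa using hx) (neg_nonpos.2 hs0))
  exact integrableOn_univ.1 (Set.union_compl_self (Metric.ball (0 : E) 1) ▸ hnear.union hfar)

theorem IsSchwartz.integrable_norm_rpow_neg_mul {f : E → ℝ} {s : ℝ} (hf : IsSchwartz f)
    (hs0 : 0 ≤ s) (hs : s < Module.finrank ℝ E) :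
    Integrable (fun x => ‖x‖ ^ (-s) * f x) μ :=
  let ⟨_, hC⟩ := hf.norm_le
  _root_.integrable_norm_rpow_neg_mul hf.integrable hC hs0 hs

end SingularKernel

section RegularizedKernel

variable {E : Type*} [NormedAddCommGroup E]

/-- The smooth approximation `(‖x‖ ^ 2 + ε) ^ (-s / 2)` of the kernel `‖x‖ ^ (-s)`. -/
def regKernel (s ε : ℝ) (x : E) : ℝ := (‖x‖ ^ 2 + ε) ^ (-s / 2)

theorem regKernel_zero (s : ℝ) (x : E) : regKernel s 0 x = ‖x‖ ^ (-s) := by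
  rw [regKernel, add_zero, ← rpow_natCast, ← rpow_mul (norm_nonneg x)]
  congr 1
  push_cast
  ring

theorem regKernel_nonneg {s ε : ℝ} (hε : 0 ≤ ε) (x : E) : 0 ≤ regKernel s ε x := by
  unfold regKernel
  positivity

theorem regKernel_le_norm_rpow {s ε : ℝ} (hs : 0 ≤ s) (hε : 0 ≤ ε) {x : E} (hx : 0 < ‖x‖) :
    regKernel s ε x ≤ ‖x‖ ^ (-s) := by
  rw [← regKernel_zero]
  exact rpow_le_rpow_of_nonpos (by positivity) (by gcongr) (by linarith)

theorem norm_regKernel_mul_le {s ε : ℝ} (hs : 0 ≤ s) (hε : 0 ≤ ε) {x : E} (hx : 0 < ‖x‖) (y : ℝ) :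
    ‖regKernel s ε x * y‖ ≤ ‖‖x‖ ^ (-s) * y‖ := by
  simp only [norm_mul, norm_of_nonneg (regKernel_nonneg hε x),
    norm_of_nonneg (rpow_nonneg (norm_nonneg x) _)]
  gcongr
  exact regKernel_le_norm_rpow hs hε hx

theorem tendsto_regKernel (s : ℝ) {x : E} (hx : 0 < ‖x‖) :
    Tendsto (fun ε => regKernel s ε x) (𝓝[>] 0) (𝓝 (‖x‖ ^ (-s))) := by
  have hcont : ContinuousAt (fun ε => regKernel s ε x) 0 :=
    ContinuousAt.rpow_const (by fun_prop) (Or.inl (by positivity))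
  simpa only [regKernel_zero] using hcont.tendsto.mono_left nhdsWithin_le_nhds

variable [InnerProductSpace ℝ E]

theorem hasFDerivAt_regKernel (s : ℝ) {ε : ℝ} (hε : 0 < ε) (x : E) :
    HasFDerivAt (regKernel s ε) ((-s * regKernel (s + 2) ε x) • innerSL ℝ x) x := by
  have h := ((hasStrictFDerivAt_norm_sq x).hasFDerivAt.add_const ε).rpow_const
    (p := -s / 2) (Or.inl (by positivity))
  refine h.congr_fderiv ?_
  rw [regKernel, show -s / 2 - 1 = -(s + 2) / 2 by ring, two_smul, smul_add, ← add_smul]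
  congr 1
  ring

theorem dirDeriv_regKernel (s : ℝ) {ε : ℝ} (hε : 0 < ε) (v x : E) :
    dirDeriv v (regKernel s ε) x = -s * (regKernel (s + 2) ε x * ⟪x, v⟫_ℝ) := by
  rw [dirDeriv, (hasFDerivAt_regKernel s hε x).fderiv]
  simp [mul_assoc]

theorem continuous_regKernel (s : ℝ) {ε : ℝ} (hε : 0 < ε) :
    Continuous (regKernel (E := E) s ε) :=
  continuous_iff_continuousAt.2 fun x => (hasFDerivAt_regKernel s hε x).continuousAt

theorem norm_regKernel_mul_inner_mul_le {s ε : ℝ} (hs : 0 ≤ s) (hε : 0 ≤ ε) {x : E}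
    (hx : 0 < ‖x‖) (v : E) (y : ℝ) :
    ‖regKernel (s + 2) ε x * ⟪x, v⟫_ℝ * y‖ ≤ ‖v‖ * ‖‖x‖ ^ (-(s + 1)) * y‖ := by
  simp only [norm_mul, norm_of_nonneg (regKernel_nonneg hε x),
    norm_of_nonneg (rpow_nonneg (norm_nonneg x) _)]
  calc regKernel (s + 2) ε x * ‖⟪x, v⟫_ℝ‖ * ‖y‖
      ≤ ‖x‖ ^ (-(s + 2)) * (‖x‖ * ‖v‖) * ‖y‖ := by
        gcongr
        exacts [regKernel_le_norm_rpow (by linarith) hε hx, norm_inner_le_norm x v]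
    _ = ‖v‖ * (‖x‖ ^ (-(s + 1)) * ‖y‖) := by
        rw [show -(s + 1) = -(s + 2) + 1 by ring, rpow_add_one hx.ne']
        ring

variable [FiniteDimensional ℝ E] [Nontrivial E] [MeasurableSpace E] [BorelSpace E]
  {μ : Measure E} [μ.IsAddHaarMeasure] {f : E → ℝ} {s : ℝ} {v : E}

theorem integral_regKernel_mul_dirDeriv (hs : 0 ≤ s) (hf : Differentiable ℝ f)
    (hfint : Integrable f μ) (hf' : Integrable (fun x => ‖x‖ ^ (-s) * dirDeriv v f x) μ)
    (hfs : Integrable (fun x => ‖x‖ ^ (-(s + 1)) * f x) μ) {ε : ℝ} (hε : 0 < ε) :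
    ∫ x, regKernel s ε x * dirDeriv v f x ∂μ =
      s * ∫ x, regKernel (s + 2) ε x * ⟪x, v⟫_ℝ * f x ∂μ := by
  have hkernel : Integrable (fun x => regKernel s ε x * f x) μ := by
    refine hfint.bdd_mul (c := ε ^ (-s / 2)) (continuous_regKernel s hε).aestronglyMeasurable
      (ae_of_all _ fun x => ?_)
    rw [norm_of_nonneg (regKernel_nonneg hε.le x)]
    exact rpow_le_rpow_of_nonpos hε (by simp) (by linarith)
  have hkernel_deriv : Integrable (fun x => regKernel s ε x * dirDeriv v f x) μ := by
    refine hf'.mono ((continuous_regKernel s hε).measurable.mul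
      (measurable_fderiv_apply_const ℝ f v)).aestronglyMeasurable ?_
    filter_upwards [ae_norm_pos] with x hx using norm_regKernel_mul_le hs hε.le hx _
  have hderiv_kernel : Integrable (fun x => regKernel (s + 2) ε x * ⟪x, v⟫_ℝ * f x) μ := by
    refine (hfs.norm.const_mul ‖v‖).mono' (((continuous_regKernel (s + 2) hε).mul
      (continuous_id.inner continuous_const)).mul hf.continuous).aestronglyMeasurable ?_
    filter_upwards [ae_norm_pos] with x hx using
      norm_regKernel_mul_inner_mul_le hs hε.le hx v (f x)
  have hdir (x : E) : fderiv ℝ (regKernel s ε) x v * f x =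
      -s * (regKernel (s + 2) ε x * ⟪x, v⟫_ℝ * f x) := by
    rw [← mul_assoc]
    exact congrArg (· * f x) (dirDeriv_regKernel s hε v x)
  have hparts := integral_mul_fderiv_eq_neg_fderiv_mul_of_integrable (μ := μ) (v := v)
    (by simpa only [hdir] using hderiv_kernel.const_mul (-s)) hkernel_deriv hkernel
    (fun x _ => (hasFDerivAt_regKernel s hε x).differentiableAt) (fun x _ => hf x)
  simp only [hdir] at hparts
  rw [integral_const_mul] at hparts
  simpa using! hparts

theorem integrable_norm_rpow_neg_mul_inner_mul (hs : 0 ≤ s) (hf : AEStronglyMeasurable f μ)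
    (hfs : Integrable (fun x => ‖x‖ ^ (-(s + 1)) * f x) μ) (v : E) :
    Integrable (fun x => ‖x‖ ^ (-(s + 2)) * ⟪x, v⟫_ℝ * f x) μ := by
  refine (hfs.norm.const_mul ‖v‖).mono' (((measurable_norm.pow_const _).mul
    (measurable_id.inner_const)).aestronglyMeasurable.mul hf) ?_
  filter_upwards [ae_norm_pos] with x hx
  rw [← regKernel_zero]
  exact norm_regKernel_mul_inner_mul_le hs le_rfl hx v (f x)

theorem integral_norm_rpow_neg_mul_dirDeriv (hs : 0 ≤ s) (hf : Differentiable ℝ f)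
    (hfint : Integrable f μ) (hf' : Integrable (fun x => ‖x‖ ^ (-s) * dirDeriv v f x) μ)
    (hfs : Integrable (fun x => ‖x‖ ^ (-(s + 1)) * f x) μ) :
    ∫ x, ‖x‖ ^ (-s) * dirDeriv v f x ∂μ =
      s * ∫ x, ‖x‖ ^ (-(s + 2)) * ⟪x, v⟫_ℝ * f x ∂μ := by
  have hlhs : Tendsto (fun ε => ∫ x, regKernel s ε x * dirDeriv v f x ∂μ) (𝓝[>] 0)
      (𝓝 (∫ x, ‖x‖ ^ (-s) * dirDeriv v f x ∂μ)) := by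
    refine tendsto_integral_filter_of_dominated_convergence _ ?_ ?_ hf'.norm ?_
    · filter_upwards [self_mem_nhdsWithin] with ε hε
      exact ((continuous_regKernel s hε).measurable.mul
        (measurable_fderiv_apply_const ℝ f v)).aestronglyMeasurable
    · filter_upwards [self_mem_nhdsWithin] with ε hε
      filter_upwards [ae_norm_pos] with x hx using norm_regKernel_mul_le hs hε.le hx _
    · filter_upwards [ae_norm_pos] with x hx using (tendsto_regKernel s hx).mul_const _
  have hrhs : Tendsto (fun ε => ∫ x, regKernel (s + 2) ε x * ⟪x, v⟫_ℝ * f x ∂μ) (𝓝[>] 0)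
      (𝓝 (∫ x, ‖x‖ ^ (-(s + 2)) * ⟪x, v⟫_ℝ * f x ∂μ)) := by
    refine tendsto_integral_filter_of_dominated_convergence _ ?_ ?_ (hfs.norm.const_mul ‖v‖) ?_
    · filter_upwards [self_mem_nhdsWithin] with ε hε
      exact (((continuous_regKernel (s + 2) hε).mul
        (continuous_id.inner continuous_const)).mul hf.continuous).aestronglyMeasurable
    · filter_upwards [self_mem_nhdsWithin] with ε hε
      filter_upwards [ae_norm_pos] with x hx using
        norm_regKernel_mul_inner_mul_le hs hε.le hx v (f x)
    · filter_upwards [ae_norm_pos] with x hx using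
        ((tendsto_regKernel (s + 2) hx).mul_const _).mul_const _
  refine tendsto_nhds_unique_of_eventuallyEq hlhs (hrhs.const_mul s) ?_
  filter_upwards [self_mem_nhdsWithin] with ε hε
  exact integral_regKernel_mul_dirDeriv hs hf hfint hf' hfs hε

end RegularizedKernel

section TimeDependent

/-- The partial derivative `∂ₜu` of a time-dependent function `u`. -/
def timeDeriv {E F : Type*} [NormedAddCommGroup F] [NormedSpace ℝ F] (u : ℝ → E → F) (t : ℝ)
    (x : E) : F :=
  deriv (fun s => u s x) t

/-- The family `f t` is rapidly decreasing in space, locally uniformly in time. -/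
def LocUnifRapidDecay {E F : Type*} [NormedAddCommGroup E] [NormedAddCommGroup F]
    (f : ℝ → E → F) : Prop :=
  ∀ (k : ℕ) (T : ℝ), ∃ C : ℝ, ∀ t ∈ Set.Icc (-T) T, ∀ x, (1 + ‖x‖) ^ k * ‖f t x‖ ≤ C

namespace LocUnifRapidDecay

variable {E F : Type*} [NormedAddCommGroup E] [NormedAddCommGroup F] {f g : ℝ → E → F}

theorem mono {G : Type*} [NormedAddCommGroup G] {g : ℝ → E → G} {C : ℝ}
    (hf : LocUnifRapidDecay f) (hle : ∀ t x, ‖g t x‖ ≤ C * ‖f t x‖) : LocUnifRapidDecay g := by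
  intro k T
  obtain ⟨A, hA⟩ := hf k T
  refine ⟨|C| * A, fun t ht x => ?_⟩
  calc (1 + ‖x‖) ^ k * ‖g t x‖ ≤ (1 + ‖x‖) ^ k * (|C| * ‖f t x‖) := by
        gcongr
        exact (hle t x).trans (by gcongr; exact le_abs_self C)
    _ = |C| * ((1 + ‖x‖) ^ k * ‖f t x‖) := by ring
    _ ≤ |C| * A := by gcongr; exact hA t ht x

theorem of_norm_pow_mul_le
    (hf : ∀ (k : ℕ) (T : ℝ), 0 < T → ∃ C : ℝ, ∀ t ∈ Set.Icc (-T) T, ∀ x, ‖x‖ ^ k * ‖f t x‖ ≤ C) :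
    LocUnifRapidDecay f := by
  intro k T
  obtain ⟨A, hA⟩ := hf 0 (|T| + 1) (by positivity)
  obtain ⟨B, hB⟩ := hf k (|T| + 1) (by positivity)
  refine ⟨2 ^ (k - 1) * (A + B), fun t ht x => ?_⟩
  have ht' : t ∈ Set.Icc (-(|T| + 1)) (|T| + 1) := by
    constructor <;> linarith [ht.1, ht.2, le_abs_self T]
  calc (1 + ‖x‖) ^ k * ‖f t x‖ ≤ 2 ^ (k - 1) * (1 ^ k + ‖x‖ ^ k) * ‖f t x‖ := by
        gcongr
        exact add_pow_le zero_le_one (norm_nonneg x) k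
    _ = 2 ^ (k - 1) * (‖x‖ ^ 0 * ‖f t x‖ + ‖x‖ ^ k * ‖f t x‖) := by ring
    _ ≤ 2 ^ (k - 1) * (A + B) := by
        gcongr
        exacts [hA t ht' x, hB t ht' x]

theorem of_iteratedFDeriv_zero [NormedSpace ℝ E] [NormedSpace ℝ F]
    (hf : LocUnifRapidDecay fun t => iteratedFDeriv ℝ 0 (f t)) : LocUnifRapidDecay f :=
  hf.mono (C := 1) fun t x => by simp

theorem dirDeriv_of_iteratedFDeriv_one [NormedSpace ℝ E] [NormedSpace ℝ F]
    (hf : LocUnifRapidDecay fun t => iteratedFDeriv ℝ 1 (f t)) (v : E) :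
    LocUnifRapidDecay fun t => dirDeriv v (f t) :=
  hf.mono (C := ‖v‖) fun t x => by
    rw [norm_iteratedFDeriv_one, mul_comm]
    exact (fderiv ℝ (f t) x).le_opNorm v

theorem add (hf : LocUnifRapidDecay f) (hg : LocUnifRapidDecay g) :
    LocUnifRapidDecay fun t x => f t x + g t x := by
  intro k T
  obtain ⟨A, hA⟩ := hf k T
  obtain ⟨B, hB⟩ := hg k T
  refine ⟨A + B, fun t ht x => ?_⟩
  calc (1 + ‖x‖) ^ k * ‖f t x + g t x‖ ≤ (1 + ‖x‖) ^ k * (‖f t x‖ + ‖g t x‖) := by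
        gcongr
        exact norm_add_le _ _
    _ = (1 + ‖x‖) ^ k * ‖f t x‖ + (1 + ‖x‖) ^ k * ‖g t x‖ := mul_add _ _ _
    _ ≤ A + B := add_le_add (hA t ht x) (hB t ht x)

theorem inner {F : Type*} [NormedAddCommGroup F] [InnerProductSpace ℝ F] {f g : ℝ → E → F}
    (hf : LocUnifRapidDecay f) (hg : LocUnifRapidDecay g) :
    LocUnifRapidDecay fun t x => ⟪f t x, g t x⟫_ℝ := by
  intro k T
  obtain ⟨A, hA⟩ := hf k T
  obtain ⟨B, hB⟩ := hg 0 T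
  refine ⟨A * B, fun t ht x => ?_⟩
  calc (1 + ‖x‖) ^ k * ‖⟪f t x, g t x⟫_ℝ‖ ≤ (1 + ‖x‖) ^ k * (‖f t x‖ * ‖g t x‖) := by
        gcongr
        exact norm_inner_le_norm _ _
    _ = ((1 + ‖x‖) ^ k * ‖f t x‖) * ((1 + ‖x‖) ^ 0 * ‖g t x‖) := by ring
    _ ≤ A * B := mul_le_mul (hA t ht x) (hB t ht x) (by positivity)
        (le_trans (by positivity) (hA t ht x))

theorem smul [NormedSpace ℝ E] [NormedSpace ℝ F] {c : E → ℝ} (hf : LocUnifRapidDecay f)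
    (hc : c.HasTemperateGrowth) : LocUnifRapidDecay fun t x => c x • f t x := by
  obtain ⟨m, B, hB⟩ := hc.2 0
  intro k T
  obtain ⟨A, hA⟩ := hf (k + m) T
  refine ⟨|B| * A, fun t ht x => ?_⟩
  have hcx : ‖c x‖ ≤ |B| * (1 + ‖x‖) ^ m := by
    simpa using (hB x).trans (mul_le_mul_of_nonneg_right (le_abs_self B) (by positivity))
  calc (1 + ‖x‖) ^ k * ‖c x • f t x‖ = (1 + ‖x‖) ^ k * (‖c x‖ * ‖f t x‖) := by rw [norm_smul]
    _ ≤ (1 + ‖x‖) ^ k * (|B| * (1 + ‖x‖) ^ m * ‖f t x‖) := by gcongr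
    _ = |B| * ((1 + ‖x‖) ^ (k + m) * ‖f t x‖) := by ring
    _ ≤ |B| * A := by gcongr; exact hA t ht x

theorem exists_norm_le_rpow (hf : LocUnifRapidDecay f) (r T : ℝ) :
    ∃ C, ∀ t ∈ Set.Icc (-T) T, ∀ x, ‖f t x‖ ≤ C * (1 + ‖x‖) ^ (-r) := by
  obtain ⟨C, hC⟩ := hf ⌈r⌉₊ T
  refine ⟨C, fun t ht x => ?_⟩
  rw [rpow_neg (by positivity), ← div_eq_mul_inv, le_div_iff₀' (by positivity)]
  refine le_trans ?_ (hC t ht x)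
  gcongr
  rw [← rpow_natCast]
  exact rpow_le_rpow_of_exponent_le (by simp) (Nat.le_ceil r)

variable [NormedSpace ℝ E] [FiniteDimensional ℝ E] [MeasurableSpace E] [BorelSpace E]
  {μ : Measure E} [μ.IsAddHaarMeasure] [NormedSpace ℝ F]

theorem hasDerivAt_integral {f' : ℝ → E → F} (hf : LocUnifRapidDecay f)
    (hf' : LocUnifRapidDecay f') (hcont : ∀ t, Continuous (f t)) (hcont' : ∀ t, Continuous (f' t))
    (hderiv : ∀ t x, HasDerivAt (fun s => f s x) (f' t x) t) (t : ℝ) :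
    Integrable (f' t) μ ∧ HasDerivAt (fun s => ∫ x, f s x ∂μ) (∫ x, f' t x ∂μ) t := by
  let r : ℝ := Module.finrank ℝ E + 1
  have hweight : Integrable (fun x : E => (1 + ‖x‖) ^ (-r)) μ :=
    integrable_one_add_norm (lt_add_one _)
  have hball : Metric.ball t 1 ⊆ Set.Icc (-(|t| + 1)) (|t| + 1) := by
    intro s hs
    rw [Metric.mem_ball, Real.dist_eq, abs_lt] at hs
    constructor <;> linarith [neg_abs_le t, le_abs_self t]
  obtain ⟨A, hA⟩ := hf.exists_norm_le_rpow r (|t| + 1)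
  obtain ⟨B, hB⟩ := hf'.exists_norm_le_rpow r (|t| + 1)
  refine hasDerivAt_integral_of_dominated_loc_of_deriv_le (Metric.ball_mem_nhds t one_pos)
    (Eventually.of_forall fun s => (hcont s).aestronglyMeasurable)
    ((hweight.const_mul A).mono' (hcont t).aestronglyMeasurable
      (ae_of_all _ (hA t (hball (Metric.mem_ball_self one_pos)))))
    (hcont' t).aestronglyMeasurable (ae_of_all _ fun x s hs => hB s (hball hs) x)
    (hweight.const_mul B) (ae_of_all _ fun x s _ => hderiv s x)

end LocUnifRapidDecay

variable {E F : Type*} [NormedAddCommGroup E] [NormedSpace ℝ E]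
  [NormedAddCommGroup F] [NormedSpace ℝ F]

theorem hasDerivAt_prodMk_left {U : ℝ × E → F} (hU : Differentiable ℝ U) (t : ℝ) (x : E) :
    HasDerivAt (fun s => U (s, x)) (dirDeriv (1, 0) U (t, x)) t :=
  HasFDerivAt.comp_hasDerivAt (f := fun s => (s, x)) t (hU (t, x)).hasFDerivAt
    ((hasDerivAt_id t).prodMk (hasDerivAt_const t x))

theorem hasDerivAt_timeDeriv {u : ℝ → E → F} (hu : Differentiable ℝ (Function.uncurry u)) (t : ℝ)
    (x : E) : HasDerivAt (fun s => u s x) (timeDeriv u t x) t :=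
  (hasDerivAt_prodMk_left hu t x).differentiableAt.hasDerivAt

theorem dirDeriv_prodMk_right {U : ℝ × E → F} (hU : Differentiable ℝ U) (v : E) (t : ℝ) (x : E) :
    dirDeriv v (fun y => U (t, y)) x = dirDeriv (0, v) U (t, x) := by
  have h := (hU (t, x)).hasFDerivAt.comp x (hasFDerivAt_prodMk_right t x)
  exact (DFunLike.congr_fun h.fderiv v).trans (by simp [dirDeriv])

theorem hasDerivAt_dirDeriv {u : ℝ → E → F} (hu : ContDiff ℝ ∞ (Function.uncurry u)) (v : E)
    (t : ℝ) (x : E) :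
    HasDerivAt (fun s => dirDeriv v (u s) x)
      (dirDeriv v (timeDeriv u t) x) t := by
  have hu' := hu.differentiable (by simp)
  have hdt : timeDeriv u t = fun y => dirDeriv (1, 0) (Function.uncurry u) (t, y) :=
    funext fun y => (hasDerivAt_prodMk_left hu' t y).deriv
  have hdx : (fun s => dirDeriv v (u s) x) =
      fun s => dirDeriv (0, v) (Function.uncurry u) (s, x) :=
    funext fun s => dirDeriv_prodMk_right hu' v s x
  rw [hdt, hdx, dirDeriv_prodMk_right ((contDiff_dirDeriv hu _).differentiable (by simp)),
    dirDeriv_comm hu]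
  exact hasDerivAt_prodMk_left ((contDiff_dirDeriv hu _).differentiable (by simp)) t x

end TimeDependent

section Euclidean3

variable {w : E3 → ℝ} {u v : E3 → ℂ}

theorem hasTemperateGrowth_lapR (hw : ∀ j, (pdR j w).HasTemperateGrowth) :
    (lapR w).HasTemperateGrowth :=
  Function.HasTemperateGrowth.sum fun j _ => hasTemperateGrowth_dirDeriv (hw j) (e3 j)

theorem IsSchwartz.I_mul (hu : IsSchwartz u) : IsSchwartz fun x => Complex.I * u x :=
  hu.clm_comp (ContinuousLinearMap.mul ℝ ℂ Complex.I)

theorem IsSchwartz.pd (hu : IsSchwartz u) (j : Fin 3) : IsSchwartz (pd j u) :=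
  hu.dirDeriv (e3 j)

theorem IsSchwartz.lap (hu : IsSchwartz u) : IsSchwartz (lap u) :=
  IsSchwartz.sum fun j _ => (hu.pd j).dirDeriv (e3 j)

theorem inner_lap (u : E3 → ℂ) (x : E3) (z : ℂ) :
    ⟪lap u x, z⟫_ℝ = ∑ j, ⟪dirDeriv (e3 j) (dirDeriv (e3 j) u) x, z⟫_ℝ :=
  sum_inner ..

theorem integral_lapR_mul_inner_lap (hw : ∀ j, (pdR j w).HasTemperateGrowth) (hu : IsSchwartz u) :
    ∫ x, lapR w x * ⟪lap u x, u x⟫_ℝ =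
      (∫ x, lapR (lapR w) x * ‖u x‖ ^ 2) / 2 - ∫ x, lapR w x * ∑ j, ‖pd j u x‖ ^ 2 := by
  have hL := hasTemperateGrowth_lapR hw
  calc ∫ x, lapR w x * ⟪lap u x, u x⟫_ℝ
      = ∑ j, ∫ x, lapR w x * ⟪dirDeriv (e3 j) (dirDeriv (e3 j) u) x, u x⟫_ℝ := by
        simp only [inner_lap, Finset.mul_sum]
        exact integral_finsetSum _ fun j _ =>
          ((((hu.pd j).dirDeriv (e3 j)).inner hu).mul hL).integrable
    _ = ∑ j, ((∫ x, pdR j (pdR j (lapR w)) x * ‖u x‖ ^ 2) / 2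
          - ∫ x, lapR w x * ‖pd j u x‖ ^ 2) :=
        Finset.sum_congr rfl fun j _ => integral_mul_inner_dirDeriv_dirDeriv_self hL hu (e3 j)
    _ = (∫ x, lapR (lapR w) x * ‖u x‖ ^ 2) / 2 - ∫ x, lapR w x * ∑ j, ‖pd j u x‖ ^ 2 := by
        rw [Finset.sum_sub_distrib, ← Finset.sum_div, ← integral_finsetSum,
          ← integral_finsetSum]
        · simp only [lapR, Finset.sum_mul, Finset.mul_sum]
        · exact fun j _ => ((hu.pd j).norm_sq.mul hL).integrable
        · exact fun j _ => (hu.norm_sq.mul (hasTemperateGrowth_dirDeriv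
            (hasTemperateGrowth_dirDeriv hL (e3 j)) (e3 j))).integrable

theorem integral_sum_pdR_mul_inner_lap (hw : ∀ j, (pdR j w).HasTemperateGrowth)
    (hu : IsSchwartz u) :
    ∫ x, ∑ k, pdR k w x * ⟪lap u x, pd k u x⟫_ℝ =
      (∫ x, lapR w x * ∑ j, ‖pd j u x‖ ^ 2) / 2
        - ∫ x, ∑ j, ∑ k, pdR2 j k w x * ⟪pd j u x, pd k u x⟫_ℝ := by
  have hw' (j k : Fin 3) : (pdR j (pdR k w)).HasTemperateGrowth :=
    hasTemperateGrowth_dirDeriv (hw k) (e3 j)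
  have hdiag : ∫ x, lapR w x * ∑ j, ‖pd j u x‖ ^ 2 =
      ∑ k, ∑ j, ∫ x, pdR k (pdR k w) x * ‖pd j u x‖ ^ 2 := by
    simp only [lapR, Finset.sum_mul_sum]
    exact integral_finsetSum_finsetSum fun k _ j _ => ((hu.pd j).norm_sq.mul (hw' k k)).integrable
  have hhess : ∫ x, ∑ j, ∑ k, pdR2 j k w x * ⟪pd j u x, pd k u x⟫_ℝ =
      ∑ k, ∑ j, ∫ x, pdR j (pdR k w) x * ⟪pd j u x, pd k u x⟫_ℝ := by
    rw [Finset.sum_comm]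
    exact integral_finsetSum_finsetSum fun j _ k _ =>
      (((hu.pd j).inner (hu.pd k)).mul (hw' j k)).integrable
  calc ∫ x, ∑ k, pdR k w x * ⟪lap u x, pd k u x⟫_ℝ
      = ∑ k, ∑ j, ∫ x, pdR k w x * ⟪dirDeriv (e3 j) (dirDeriv (e3 j) u) x, pd k u x⟫_ℝ := by
        simp only [inner_lap, Finset.mul_sum]
        exact integral_finsetSum_finsetSum fun k _ j _ =>
          ((((hu.pd j).dirDeriv (e3 j)).inner (hu.pd k)).mul (hw k)).integrable
    _ = ∑ k, ∑ j, ((∫ x, pdR k (pdR k w) x * ‖pd j u x‖ ^ 2) / 2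
          - ∫ x, pdR j (pdR k w) x * ⟪pd j u x, pd k u x⟫_ℝ) :=
        Finset.sum_congr rfl fun k _ => Finset.sum_congr rfl fun j _ =>
          integral_mul_inner_dirDeriv_dirDeriv (hw k) hu (e3 j) (e3 k)
    _ = (∫ x, lapR w x * ∑ j, ‖pd j u x‖ ^ 2) / 2
          - ∫ x, ∑ j, ∑ k, pdR2 j k w x * ⟪pd j u x, pd k u x⟫_ℝ := by
        simp only [Finset.sum_sub_distrib, ← Finset.sum_div, hdiag, hhess]

theorem integrable_sum_pdR_mul_inner_add {p : E3 → ℂ} (hw : ∀ j, (pdR j w).HasTemperateGrowth)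
    (hu : IsSchwartz u) (hp : IsSchwartz p) :
    Integrable fun x => 2 * ∑ k, pdR k w x * ⟪p x, pd k u x⟫_ℝ + lapR w x * ⟪p x, u x⟫_ℝ :=
  (((IsSchwartz.sum fun k _ => (hp.inner (hu.pd k)).mul (hw k)).integrable).const_mul
    2).add ((hp.inner hu).mul (hasTemperateGrowth_lapR hw)).integrable

theorem integrable_neg_lapR_lapR_mul_norm_sq (hw : ∀ j, (pdR j w).HasTemperateGrowth)
    (hu : IsSchwartz u) : Integrable fun x => -lapR (lapR w) x * ‖u x‖ ^ 2 :=
  (hu.norm_sq.mul (hasTemperateGrowth_lapR fun j =>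
    hasTemperateGrowth_dirDeriv (hasTemperateGrowth_lapR hw) (e3 j)).neg).integrable

theorem integrable_sum_pdR2_mul_inner (hw : ∀ j, (pdR j w).HasTemperateGrowth)
    (hu : IsSchwartz u) :
    Integrable fun x => ∑ j, ∑ k, pdR2 j k w x * ⟪pd j u x, pd k u x⟫_ℝ :=
  (IsSchwartz.sum fun j _ => IsSchwartz.sum fun k _ => ((hu.pd j).inner
    (hu.pd k)).mul (hasTemperateGrowth_dirDeriv (hw k) (e3 j))).integrable

theorem two_mul_integral_sum_pdR_mul_inner_lap_add (hw : ∀ j, (pdR j w).HasTemperateGrowth)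
    (hu : IsSchwartz u) :
    2 * ∫ x, (2 * ∑ k, pdR k w x * ⟪lap u x, pd k u x⟫_ℝ + lapR w x * ⟪lap u x, u x⟫_ℝ) =
      -∫ x, (-lapR (lapR w) x * ‖u x‖ ^ 2
        + 4 * ∑ j, ∑ k, pdR2 j k w x * ⟪pd j u x, pd k u x⟫_ℝ) := by
  have hint : Integrable fun x => ∑ k, pdR k w x * ⟪lap u x, pd k u x⟫_ℝ :=
    integrable_finsetSum _ fun k _ => ((hu.lap.inner (hu.pd k)).mul (hw k)).integrable
  rw [integral_add (hint.const_mul 2)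
      ((hu.lap.inner hu).mul (hasTemperateGrowth_lapR hw)).integrable,
    integral_add (integrable_neg_lapR_lapR_mul_norm_sq hw hu)
      ((integrable_sum_pdR2_mul_inner hw hu).const_mul 4)]
  simp only [neg_mul, integral_neg, integral_const_mul]
  rw [integral_sum_pdR_mul_inner_lap hw hu, integral_lapR_mul_inner_lap hw hu]
  ring

theorem inner_I_mul_left (y z : ℂ) : ⟪Complex.I * y, z⟫_ℝ = -⟪y, Complex.I * z⟫_ℝ := by
  simp only [Complex.inner, Complex.mul_re, Complex.mul_im, Complex.conj_re, Complex.conj_im,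
    Complex.I_re, Complex.I_im]
  ring

theorem im_conj_mul_sum_ofReal_mul {ι : Type*} (s : Finset ι) (c : ι → ℝ) (y : ℂ) (z : ι → ℂ) :
    (conj y * ∑ i ∈ s, (c i : ℂ) * z i).im = ∑ i ∈ s, c i * ⟪Complex.I * y, z i⟫_ℝ := by
  rw [Finset.mul_sum, Complex.im_sum]
  refine Finset.sum_congr rfl fun i _ => ?_
  simp only [Complex.inner, Complex.mul_re, Complex.mul_im, Complex.conj_re, Complex.conj_im,
    Complex.I_re, Complex.I_im, Complex.ofReal_re, Complex.ofReal_im]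
  ring

theorem im_integral_conj_mul_sum (hw : ∀ j, (pdR j w).HasTemperateGrowth) (hu : IsSchwartz u) :
    (∫ x, conj (u x) * ∑ j, (pdR j w x : ℂ) * pd j u x).im =
      ∑ j, ∫ x, pdR j w x * ⟪Complex.I * u x, pd j u x⟫_ℝ := by
  have hflux (j : Fin 3) : IsSchwartz fun x => (pdR j w x : ℂ) * pd j u x :=
    (hu.pd j).smul (hw j)
  have hint : Integrable fun x => conj (u x) * ∑ j, (pdR j w x : ℂ) * pd j u x :=
    ((hu.clm_comp Complex.conjCLE.toContinuousLinearMap).bilin (ContinuousLinearMap.mul ℝ ℂ)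
      (IsSchwartz.sum fun j _ => hflux j).hasTemperateGrowth).integrable
  refine (integral_im hint).symm.trans ?_
  simp only [RCLike.im_to_complex, im_conj_mul_sum_ofReal_mul]
  exact integral_finsetSum _ fun j _ =>
    ((hu.I_mul.inner (hu.pd j)).mul (hw j)).integrable

theorem integral_sum_pdR_mul_inner_I_mul (hw : ∀ j, (pdR j w).HasTemperateGrowth)
    (hu : IsSchwartz u) (hv : IsSchwartz v) :
    ∫ x, (∑ j, pdR j w x * ⟪Complex.I * v x, pd j u x⟫_ℝ
        + ∑ j, pdR j w x * ⟪Complex.I * u x, pd j v x⟫_ℝ) =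
      ∫ x, (2 * ∑ j, pdR j w x * ⟪Complex.I * v x, pd j u x⟫_ℝ
        + lapR w x * ⟪Complex.I * v x, u x⟫_ℝ) := by
  have hvu (j : Fin 3) : Integrable fun x => pdR j w x * ⟪Complex.I * v x, pd j u x⟫_ℝ :=
    ((hv.I_mul.inner (hu.pd j)).mul (hw j)).integrable
  have huv (j : Fin 3) : Integrable fun x => pdR j w x * ⟪Complex.I * u x, pd j v x⟫_ℝ :=
    ((hu.I_mul.inner (hv.pd j)).mul (hw j)).integrable
  have hdiag (j : Fin 3) : Integrable fun x => pdR j (pdR j w) x * ⟪Complex.I * v x, u x⟫_ℝ :=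
    ((hv.I_mul.inner hu).mul (hasTemperateGrowth_dirDeriv (hw j) (e3 j))).integrable
  have hskew (j : Fin 3) : ∫ x, pdR j w x * ⟪Complex.I * u x, pd j v x⟫_ℝ =
      (∫ x, pdR j w x * ⟪Complex.I * v x, pd j u x⟫_ℝ)
        + ∫ x, pdR j (pdR j w) x * ⟪Complex.I * v x, u x⟫_ℝ :=
    integral_mul_inner_skew_dirDeriv (J := ContinuousLinearMap.mul ℝ ℂ Complex.I) (μ := volume)
      inner_I_mul_left (hw j) hu hv (e3 j)
  simp only [lapR, Finset.sum_mul]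
  rw [integral_add (integrable_finsetSum _ fun j _ => hvu j)
      (integrable_finsetSum _ fun j _ => huv j),
    integral_add ((integrable_finsetSum _ fun j _ => hvu j).const_mul 2)
      (integrable_finsetSum _ fun j _ => hdiag j), integral_const_mul,
    integral_finsetSum _ fun j _ => hvu j, integral_finsetSum _ fun j _ => huv j,
    integral_finsetSum _ fun j _ => hdiag j, Finset.sum_congr rfl fun j _ => hskew j,
    Finset.sum_add_distrib]
  ring

/-- The divergence of the vector field `ρ ∇w`. -/
def divMulGrad (w ρ : E3 → ℝ) (x : E3) : ℝ := ∑ j : Fin 3, pdR j (fun y => ρ y * pdR j w y) x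

/-- The radial derivative `x · ∇w`. -/
def radialDeriv (w : E3 → ℝ) (x : E3) : ℝ := ∑ j : Fin 3, x j * pdR j w x

theorem divMulGrad_eq {ρ : E3 → ℝ} {x : E3} (hρ : DifferentiableAt ℝ ρ x)
    (hw : ∀ j, DifferentiableAt ℝ (pdR j w) x) :
    divMulGrad w ρ x = ∑ j, pdR j w x * pdR j ρ x + ρ x * lapR w x := by
  simp only [divMulGrad, lapR, Finset.mul_sum, ← Finset.sum_add_distrib]
  refine Finset.sum_congr rfl fun j _ => (dirDeriv_mul hρ (hw j) (e3 j)).trans ?_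
  rw [add_comm, mul_comm (dirDeriv _ _ _)]
  rfl

theorem divMulGrad_norm_sq {x : E3} (hu : DifferentiableAt ℝ u x)
    (hw : ∀ j, DifferentiableAt ℝ (pdR j w) x) :
    divMulGrad w (fun y => ‖u y‖ ^ 2) x =
      2 * ∑ j, pdR j w x * ⟪u x, pd j u x⟫_ℝ + lapR w x * ⟪u x, u x⟫_ℝ := by
  have hpdR (j : Fin 3) : pdR j (fun y => ‖u y‖ ^ 2) x = 2 * ⟪u x, pd j u x⟫_ℝ := by
    rw [real_inner_comm]
    exact dirDeriv_norm_sq hu (e3 j)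
  rw [divMulGrad_eq (hu.norm_sq ℝ) hw, Finset.mul_sum, real_inner_self_eq_norm_sq]
  simp only [hpdR]
  congr 1
  · exact Finset.sum_congr rfl fun j _ => by ring
  · ring

theorem divMulGrad_sq {ρ : E3 → ℝ} {x : E3} (hρ : DifferentiableAt ℝ ρ x)
    (hw : ∀ j, DifferentiableAt ℝ (pdR j w) x) :
    divMulGrad w (fun y => ρ y ^ 2) x =
      2 * (ρ x * divMulGrad w ρ x) - lapR w x * ρ x ^ 2 := by
  have hpdR (j : Fin 3) : pdR j (fun y => ρ y ^ 2) x = 2 * ρ x * pdR j ρ x := by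
    simp [pdR, fderiv_fun_pow 2 hρ]
  rw [divMulGrad_eq hρ hw, divMulGrad_eq (hρ.fun_pow 2) hw]
  simp only [hpdR, mul_left_comm _ (2 * ρ x), ← Finset.mul_sum]
  ring

theorem IsSchwartz.divMulGrad {ρ : E3 → ℝ} (hρ : IsSchwartz ρ)
    (hw : ∀ j, (pdR j w).HasTemperateGrowth) : IsSchwartz (divMulGrad w ρ) := by
  refine IsSchwartz.sum fun j _ => ?_
  simp only [mul_comm (ρ _)]
  exact (hρ.mul (hw j)).dirDeriv (e3 j)

theorem mul_divMulGrad_norm_sq {N : ℝ} {x : E3} {y z : ℂ} (hu : DifferentiableAt ℝ u x)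
    (hw : ∀ j, DifferentiableAt ℝ (pdR j w) x) (heq : y + z = (N : ℂ) * u x) :
    N * divMulGrad w (fun y => ‖u y‖ ^ 2) x =
      (2 * ∑ k, pdR k w x * ⟪y, pd k u x⟫_ℝ + lapR w x * ⟪y, u x⟫_ℝ)
        + (2 * ∑ k, pdR k w x * ⟪z, pd k u x⟫_ℝ + lapR w x * ⟪z, u x⟫_ℝ) := by
  have hinner (ζ : ℂ) : N * ⟪u x, ζ⟫_ℝ = ⟪y, ζ⟫_ℝ + ⟪z, ζ⟫_ℝ := by
    rw [← inner_add_left, heq, ← Complex.real_smul, real_inner_smul_left]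
  rw [divMulGrad_norm_sq hu hw, mul_add, mul_left_comm, mul_left_comm _ (lapR w x), hinner,
    Finset.mul_sum]
  simp only [mul_left_comm N, hinner, mul_add, Finset.sum_add_distrib]
  ring

theorem two_mul_integral_sum_pdR_mul_inner_add {p : E3 → ℂ} {N : E3 → ℝ}
    (hw : ∀ j, (pdR j w).HasTemperateGrowth) (hu : IsSchwartz u) (hp : IsSchwartz p)
    (heq : ∀ᵐ x, p x + lap u x = (N x : ℂ) * u x) :
    2 * ∫ x, (2 * ∑ k, pdR k w x * ⟪p x, pd k u x⟫_ℝ + lapR w x * ⟪p x, u x⟫_ℝ) =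
      (∫ x, (-lapR (lapR w) x * ‖u x‖ ^ 2
        + 4 * ∑ j, ∑ k, pdR2 j k w x * ⟪pd j u x, pd k u x⟫_ℝ))
      + 2 * ∫ x, N x * divMulGrad w (fun y => ‖u y‖ ^ 2) x := by
  have hflux := integral_congr_ae (heq.mono fun x => mul_divMulGrad_norm_sq
    (hu.differentiable x) fun j => (hw j).1.differentiable (by simp) x)
  rw [integral_add (integrable_sum_pdR_mul_inner_add hw hu hp)
    (integrable_sum_pdR_mul_inner_add hw hu hu.lap), ← mul_right_inj' two_ne_zero, mul_add,
    two_mul_integral_sum_pdR_mul_inner_lap_add hw hu] at hflux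
  linarith

/-- The potential `a |x|⁻² + λ |x|⁻ᵇ ρ` by which (INLS) multiplies `u` when `ρ = |u|²`. -/
def inlsPotential (a b lam : ℝ) (ρ : E3 → ℝ) (x : E3) : ℝ :=
  a * ‖x‖ ^ (-2 : ℝ) + lam * (‖x‖ ^ (-b) * ρ x)

section Potential

variable {a b lam s : ℝ} {ρ : E3 → ℝ}

theorem radialDeriv_mul_mul (w : E3 → ℝ) (x : E3) (c y : ℝ) :
    radialDeriv w x * c * y = ∑ j, c * ⟪x, e3 j⟫_ℝ * (y * pdR j w x) := by
  simp only [radialDeriv, e3, EuclideanSpace.inner_single_right, Finset.sum_mul]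
  exact Finset.sum_congr rfl fun j _ => by simp; ring

theorem integrable_radialDeriv_mul (hs : 0 ≤ s) (hw : ∀ j, (pdR j w).HasTemperateGrowth)
    (hρ : IsSchwartz ρ) (hint : ∀ j, Integrable fun x => ‖x‖ ^ (-(s + 1)) * (ρ x * pdR j w x)) :
    Integrable fun x => radialDeriv w x * ‖x‖ ^ (-(s + 2)) * ρ x := by
  simp only [radialDeriv_mul_mul]
  exact integrable_finsetSum _ fun j _ => integrable_norm_rpow_neg_mul_inner_mul hs
    (hρ.contDiff.continuous.mul (hw j).1.continuous).aestronglyMeasurable (hint j) (e3 j)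

theorem integral_norm_rpow_neg_mul_divMulGrad (hs0 : 0 ≤ s) (hs : s < 3)
    (hw : ∀ j, (pdR j w).HasTemperateGrowth) (hρ : IsSchwartz ρ)
    (hint : ∀ j, Integrable fun x => ‖x‖ ^ (-(s + 1)) * (ρ x * pdR j w x)) :
    ∫ x, ‖x‖ ^ (-s) * divMulGrad w ρ x =
      s * ∫ x, radialDeriv w x * ‖x‖ ^ (-(s + 2)) * ρ x := by
  have hf (j : Fin 3) : IsSchwartz fun x => ρ x * pdR j w x := by
    simpa only [mul_comm] using hρ.mul (hw j)
  have hf' (j : Fin 3) :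
      Integrable fun x => ‖x‖ ^ (-s) * pdR j (fun y => ρ y * pdR j w y) x :=
    ((hf j).dirDeriv (e3 j)).integrable_norm_rpow_neg_mul hs0 (by simpa using hs)
  simp only [divMulGrad, radialDeriv_mul_mul, Finset.mul_sum]
  rw [integral_finsetSum _ fun j _ => hf' j,
    integral_finsetSum _ fun j _ => integrable_norm_rpow_neg_mul_inner_mul hs0
      (hf j).contDiff.continuous.aestronglyMeasurable (hint j) (e3 j), Finset.mul_sum]
  exact Finset.sum_congr rfl fun j _ => integral_norm_rpow_neg_mul_dirDeriv hs0
    (hf j).differentiable (hf j).integrable (hf' j) (hint j)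

theorem integrable_norm_rpow_neg_three_mul {p : E3 → ℂ} {g : E3 → ℝ} (hb0 : 0 ≤ b) (hb : b < 2)
    (hu : IsSchwartz u) (hp : IsSchwartz p) (hg : g.HasTemperateGrowth)
    (heq : ∀ᵐ x, p x + lap u x = (inlsPotential a b lam (fun y => ‖u y‖ ^ 2) x : ℂ) * u x) :
    Integrable fun x => a * (‖x‖ ^ (-(2 + 1) : ℝ) * (‖u x‖ ^ 2 * g x)) := by
  have hpair : IsSchwartz fun x => g x * ⟪p x + lap u x, u x⟫_ℝ :=
    ((hp.add hu.lap).inner hu).mul hg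
  have hquartic : IsSchwartz fun x => g x * (‖u x‖ ^ 2 * ‖u x‖ ^ 2) :=
    (hu.norm_sq.mul hu.norm_sq.hasTemperateGrowth).mul hg
  refine ((hpair.integrable_norm_rpow_neg_mul zero_le_one (by simp)).sub
    ((hquartic.integrable_norm_rpow_neg_mul (s := b + 1) (by linarith)
      (by simp; linarith)).const_mul lam)).congr ?_
  filter_upwards [heq, ae_norm_pos] with x hx hpos
  have hsplit : -(2 + 1 : ℝ) = -1 + -2 := by norm_num
  rw [Pi.sub_apply, hx, ← Complex.real_smul, real_inner_smul_left, real_inner_self_eq_norm_sq,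
    inlsPotential, hsplit, neg_add_rev b, rpow_add hpos, rpow_add hpos]
  ring

theorem two_mul_integral_inlsPotential_mul_divMulGrad (hb0 : 0 ≤ b) (hb : b < 2)
    (hw : ∀ j, (pdR j w).HasTemperateGrowth) (hρ : IsSchwartz ρ)
    (hint : ∀ j, Integrable fun x => a * (‖x‖ ^ (-(2 + 1) : ℝ) * (ρ x * pdR j w x))) :
    2 * ∫ x, inlsPotential a b lam ρ x * divMulGrad w ρ x =
      4 * (∫ x, a * (radialDeriv w x * ‖x‖ ^ (-(2 + 2) : ℝ) * ρ x))
        + lam * b * (∫ x, radialDeriv w x * ‖x‖ ^ (-(b + 2)) * ρ x ^ 2)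
        + lam * ∫ x, ‖x‖ ^ (-b) * (lapR w x * ρ x ^ 2) := by
  have hρ2 : IsSchwartz fun x => ρ x ^ 2 := by
    simpa only [sq] using hρ.mul hρ.hasTemperateGrowth
  have hinverse_square : a * ∫ x, ‖x‖ ^ (-2 : ℝ) * divMulGrad w ρ x =
      2 * ∫ x, a * (radialDeriv w x * ‖x‖ ^ (-(2 + 2) : ℝ) * ρ x) := by
    rcases eq_or_ne a 0 with rfl | ha
    · simp
    rw [integral_norm_rpow_neg_mul_divMulGrad zero_le_two (by norm_num) hw hρ fun j =>
      (integrable_const_mul_iff ha.isUnit _).1 (hint j), integral_const_mul]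
    ring
  have hquartic : ∫ x, ‖x‖ ^ (-b) * divMulGrad w (fun y => ρ y ^ 2) x =
      b * ∫ x, radialDeriv w x * ‖x‖ ^ (-(b + 2)) * ρ x ^ 2 :=
    integral_norm_rpow_neg_mul_divMulGrad hb0 (by linarith) hw hρ2 fun j => by
      simpa only [mul_comm] using (hρ2.mul (hw j)).integrable_norm_rpow_neg_mul
        (s := b + 1) (by linarith) (by simp; linarith)
  have hlap := (hρ2.mul (hasTemperateGrowth_lapR hw)).integrable_norm_rpow_neg_mul
    (μ := volume) (s := b) hb0 (by simp; linarith)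
  have hdiv := (hρ.divMulGrad hw).integrable_norm_rpow_neg_mul (μ := volume)
    zero_le_two (by norm_num)
  have hdiv2 := (hρ2.divMulGrad hw).integrable_norm_rpow_neg_mul (μ := volume) (s := b)
    hb0 (by simp; linarith)
  have hsplit (x : E3) : 2 * (inlsPotential a b lam ρ x * divMulGrad w ρ x) =
      2 * a * (‖x‖ ^ (-2 : ℝ) * divMulGrad w ρ x)
        + lam * (‖x‖ ^ (-b) * divMulGrad w (fun y => ρ y ^ 2) x)
        + lam * (‖x‖ ^ (-b) * (lapR w x * ρ x ^ 2)) := by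
    rw [divMulGrad_sq (hρ.differentiable x) fun j => (hw j).1.differentiable (by simp) x,
      inlsPotential]
    ring
  rw [← integral_const_mul]
  simp only [hsplit]
  rw [integral_add ((hdiv.const_mul _).fun_add (hdiv2.const_mul _)) (hlap.const_mul _),
    integral_add (hdiv.const_mul _) (hdiv2.const_mul _), integral_const_mul,
    integral_const_mul, integral_const_mul, hquartic, mul_assoc 2 a, hinverse_square]
  ring

theorem two_mul_integral_sum_pdR_mul_inner_add_eq_virial {p : E3 → ℂ} (hb0 : 0 ≤ b) (hb : b < 2)
    (hw : ∀ j, (pdR j w).HasTemperateGrowth) (hu : IsSchwartz u) (hp : IsSchwartz p)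
    (heq : ∀ᵐ x, p x + lap u x = (inlsPotential a b lam (fun y => ‖u y‖ ^ 2) x : ℂ) * u x) :
    2 * ∫ x, (2 * ∑ k, pdR k w x * ⟪p x, pd k u x⟫_ℝ + lapR w x * ⟪p x, u x⟫_ℝ) =
      (∫ x, (-lapR (lapR w) x * ‖u x‖ ^ 2
          + 4 * ∑ j, ∑ k, pdR2 j k w x * ⟪pd j u x, pd k u x⟫_ℝ
          + 4 * a * (radialDeriv w x / ‖x‖ ^ 4) * ‖u x‖ ^ 2))
        + lam * b * (∫ x, radialDeriv w x * ‖x‖ ^ (-(2 + b)) * ‖u x‖ ^ 4)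
        + lam * ∫ x, lapR w x * (‖u x‖ ^ 4 * ‖x‖ ^ (-b)) := by
  have hcrit (j : Fin 3) :=
    integrable_norm_rpow_neg_three_mul hb0 hb hu hp (hw j) heq
  have hradial : Integrable fun x =>
      a * (radialDeriv w x * ‖x‖ ^ (-(2 + 2) : ℝ) * ‖u x‖ ^ 2) := by
    rcases eq_or_ne a 0 with rfl | ha
    · simp
    exact (integrable_radialDeriv_mul zero_le_two hw hu.norm_sq fun j =>
      (integrable_const_mul_iff ha.isUnit _).1 (hcrit j)).const_mul a
  have hinverse_square (x : E3) : 4 * a * (radialDeriv w x / ‖x‖ ^ 4) * ‖u x‖ ^ 2 =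
      4 * (a * (radialDeriv w x * ‖x‖ ^ (-(2 + 2) : ℝ) * ‖u x‖ ^ 2)) := by
    rw [show -(2 + 2 : ℝ) = -(4 : ℕ) by norm_num, rpow_neg (norm_nonneg x), rpow_natCast]
    ring
  rw [two_mul_integral_sum_pdR_mul_inner_add hw hu hp heq,
    two_mul_integral_inlsPotential_mul_divMulGrad hb0 hb hw hu.norm_sq hcrit]
  simp only [hinverse_square]
  rw [integral_add ((integrable_neg_lapR_lapR_mul_norm_sq hw hu).fun_add
    ((integrable_sum_pdR2_mul_inner hw hu).const_mul 4)) (hradial.const_mul 4),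
    integral_const_mul 4, add_comm b 2]
  simp only [← pow_mul, mul_left_comm _ (lapR w _), mul_comm (‖_‖ ^ (-b))]
  ring

end Potential

end Euclidean3

namespace IsSchwartzSolution

variable {a b lam : ℝ} {u : ℝ → E3 → ℂ} {w : E3 → ℝ}

theorem isSchwartz (hu : IsSchwartzSolution a b lam u) (t : ℝ) : IsSchwartz (u t) :=
  let ⟨f, hf⟩ := hu.schwartz t
  ⟨f, funext hf⟩

theorem isSchwartz_timeDeriv (hu : IsSchwartzSolution a b lam u) (t : ℝ) :
    IsSchwartz (timeDeriv u t) :=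
  let ⟨f, hf⟩ := hu.schwartz_dt t
  ⟨f, funext hf⟩

theorem locUnifRapidDecay_iteratedFDeriv (hu : IsSchwartzSolution a b lam u) (n : ℕ) :
    LocUnifRapidDecay fun t => iteratedFDeriv ℝ n (u t) :=
  .of_norm_pow_mul_le fun k T hT =>
    let ⟨C, hC⟩ := hu.unif_bound k n T hT
    ⟨C, fun t ht x => (le_add_of_nonneg_right (by positivity)).trans (hC t ht x)⟩

theorem locUnifRapidDecay_iteratedFDeriv_timeDeriv (hu : IsSchwartzSolution a b lam u) (n : ℕ) :
    LocUnifRapidDecay fun t => iteratedFDeriv ℝ n (timeDeriv u t) :=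
  .of_norm_pow_mul_le fun k T hT =>
    let ⟨C, hC⟩ := hu.unif_bound k n T hT
    ⟨C, fun t ht x => (le_add_of_nonneg_left (by positivity)).trans (hC t ht x)⟩

theorem hasDerivAt_integral_mul_inner {g : E3 → ℝ} (hu : IsSchwartzSolution a b lam u)
    (hg : g.HasTemperateGrowth) (e : E3) (t : ℝ) :
    HasDerivAt (fun s => ∫ x, g x * ⟪Complex.I * u s x, dirDeriv e (u s) x⟫_ℝ)
      (∫ x, (g x * ⟪Complex.I * timeDeriv u t x, dirDeriv e (u t) x⟫_ℝ
        + g x * ⟪Complex.I * u t x, dirDeriv e (timeDeriv u t) x⟫_ℝ)) t := by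
  let v := timeDeriv u
  have decay_I {f : ℝ → E3 → ℂ} (hf : LocUnifRapidDecay fun s => iteratedFDeriv ℝ 0 (f s)) :
      LocUnifRapidDecay fun s x => Complex.I * f s x :=
    hf.of_iteratedFDeriv_zero.mono (C := 1) fun s x => by simp
  have hIu := decay_I (hu.locUnifRapidDecay_iteratedFDeriv 0)
  have hIv := decay_I (hu.locUnifRapidDecay_iteratedFDeriv_timeDeriv 0)
  have hdu := (hu.locUnifRapidDecay_iteratedFDeriv 1).dirDeriv_of_iteratedFDeriv_one e
  have hdv := (hu.locUnifRapidDecay_iteratedFDeriv_timeDeriv 1).dirDeriv_of_iteratedFDeriv_one e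
  have hS := hu.isSchwartz
  have hS' := hu.isSchwartz_timeDeriv
  have hderiv (s : ℝ) (x : E3) :
      HasDerivAt (fun r => g x * ⟪Complex.I * u r x, dirDeriv e (u r) x⟫_ℝ)
        (g x * ⟪Complex.I * v s x, dirDeriv e (u s) x⟫_ℝ
          + g x * ⟪Complex.I * u s x, dirDeriv e (v s) x⟫_ℝ) s := by
    have hut := hasDerivAt_timeDeriv (hu.smooth.differentiable (by simp)) s x
    rw [← mul_add, add_comm]
    exact ((hut.const_mul Complex.I).inner ℝ
      (hasDerivAt_dirDeriv hu.smooth e s x)).const_mul (g x)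
  exact (LocUnifRapidDecay.hasDerivAt_integral (μ := volume) ((hIu.inner hdu).smul hg)
    (((hIv.inner hdu).smul hg).add ((hIu.inner hdv).smul hg))
    (fun s => (((hS s).I_mul.inner ((hS s).dirDeriv e)).mul hg).contDiff.continuous)
    (fun s => ((((hS' s).I_mul.inner ((hS s).dirDeriv e)).mul hg).add
      (((hS s).I_mul.inner ((hS' s).dirDeriv e)).mul hg)).contDiff.continuous) hderiv t).2

theorem hasDerivAt_momentum (hu : IsSchwartzSolution a b lam u)
    (hw : ∀ j, (pdR j w).HasTemperateGrowth) (t : ℝ) :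
    HasDerivAt (fun s => (∫ x, conj (u s x) * ∑ j, (pdR j w x : ℂ) * pd j (u s) x).im)
      (∫ x, (∑ j, pdR j w x * ⟪Complex.I * timeDeriv u t x, pd j (u t) x⟫_ℝ
        + ∑ j, pdR j w x * ⟪Complex.I * u t x, pd j (timeDeriv u t) x⟫_ℝ)) t := by
  simp only [im_integral_conj_mul_sum hw (hu.isSchwartz _), ← Finset.sum_add_distrib]
  have hS := hu.isSchwartz t
  have hS' := hu.isSchwartz_timeDeriv t
  rw [integral_finsetSum _ fun j _ => (((hS'.I_mul.inner (hS.pd j)).mul (hw j)).add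
    ((hS.I_mul.inner (hS'.pd j)).mul (hw j))).integrable]
  exact HasDerivAt.fun_sum fun j _ => hu.hasDerivAt_integral_mul_inner (hw j) (e3 j) t

theorem ae_eq_inlsPotential_mul (hu : IsSchwartzSolution a b lam u) (t : ℝ) :
    ∀ᵐ x, Complex.I * timeDeriv u t x + lap (u t) x =
      (inlsPotential a b lam (fun y => ‖u t y‖ ^ 2) x : ℂ) * u t x := by
  filter_upwards [ae_norm_pos] with x hx
  rw [← sub_eq_zero, ← sub_eq_zero.2 (hu.eqn t x (norm_pos_iff.1 hx)), inlsPotential,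
    rpow_neg hx.le, rpow_two]
  push_cast [timeDeriv]
  ring

end IsSchwartzSolution

theorem virial_identity_general {a b lam : ℝ} (hb0 : 0 ≤ b) (hb : b < 2) {u : ℝ → E3 → ℂ}
    (hu : IsSchwartzSolution a b lam u) {w : E3 → ℝ} (hw : ContDiff ℝ (⊤ : ℕ∞) w)
    (hwpoly : ∀ n : ℕ, 1 ≤ n → ∃ C : ℝ, ∃ m : ℕ, ∀ x : E3,
      ‖iteratedFDeriv ℝ n w x‖ ≤ C * (1 + ‖x‖) ^ m)
    (t : ℝ) :
    HasDerivAt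
      (fun s => 2 * (∫ x : E3, (starRingEnd ℂ) (u s x)
          * ∑ j : Fin 3, ((pdR j w x : ℝ) : ℂ) * pd j (u s) x).im)
      ((∫ x : E3, ((-(lapR (lapR w) x)) * ‖u t x‖ ^ 2
          + 4 * ∑ j : Fin 3, ∑ k : Fin 3,
              pdR2 j k w x * ((starRingEnd ℂ) (pd j (u t) x) * pd k (u t) x).re
          + 4 * a * ((∑ j : Fin 3, x j * pdR j w x) / ‖x‖ ^ 4) * ‖u t x‖ ^ 2))
        + lam * b * (∫ x : E3,
            ((∑ j : Fin 3, x j * pdR j w x) * ‖x‖ ^ (-(2 + b))) * ‖u t x‖ ^ 4)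
        + lam * ∫ x : E3, lapR w x * (‖u t x‖ ^ 4 * ‖x‖ ^ (-b))) t := by
  have hw' (j : Fin 3) : (pdR j w).HasTemperateGrowth :=
    hasTemperateGrowth_dirDeriv_of_bound hw hwpoly (e3 j)
  have hV := (hu.hasDerivAt_momentum hw' t).const_mul 2
  rw [integral_sum_pdR_mul_inner_I_mul hw' (hu.isSchwartz t) (hu.isSchwartz_timeDeriv t),
    two_mul_integral_sum_pdR_mul_inner_add_eq_virial hb0 hb hw' (hu.isSchwartz t)
      (hu.isSchwartz_timeDeriv t).I_mul (hu.ae_eq_inlsPotential_mul t)] at hV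
  have hinner (y z : ℂ) : ⟪y, z⟫_ℝ = (conj y * z).re := by rw [Complex.inner, mul_comm]
  simpa only [hinner, radialDeriv] using hV

/-- **Virial identity for (INLS) with a general weight.** For a smooth Schwartz
solution `u` of (INLS) and a smooth weight `w` with polynomially bounded
derivatives of all orders `≥ 1`, with `V(t;w) = 2 Im ∫ conj(u) ∇w·∇u dx`,
`(d/dt)V(t;w) = ∫ [(−ΔΔw)|u|² + 4 ∂_j∂_k w Re(∂_j conj(u) ∂_k u)
  + 4a (x·∇w/|x|⁴)|u|²] + λb ∫ (x·∇w/|x|^{2+b})|u|⁴ + λ ∫ Δw |u|⁴/|x|^b`. -/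
theorem virial_identity (a b lam : ℝ) (ha : -(1/4 : ℝ) < a)
    (hb0 : 0 < b) (hb1 : b < 1) (hlam : lam = 1 ∨ lam = -1)
    (u : ℝ → E3 → ℂ) (hu : IsSchwartzSolution a b lam u)
    (w : E3 → ℝ) (hw : ContDiff ℝ (⊤ : ℕ∞) w)
    (hwpoly : ∀ n : ℕ, 1 ≤ n → ∃ C : ℝ, ∃ m : ℕ, ∀ x : E3,
        ‖iteratedFDeriv ℝ n w x‖ ≤ C * (1 + ‖x‖) ^ m)
    (t : ℝ) :
    HasDerivAt
      (fun s => 2 * (∫ x : E3, (starRingEnd ℂ) (u s x)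
          * ∑ j : Fin 3, ((pdR j w x : ℝ) : ℂ) * pd j (u s) x).im)
      ((∫ x : E3, ((-(lapR (lapR w) x)) * ‖u t x‖ ^ 2
          + 4 * ∑ j : Fin 3, ∑ k : Fin 3,
              pdR2 j k w x * ((starRingEnd ℂ) (pd j (u t) x) * pd k (u t) x).re
          + 4 * a * ((∑ j : Fin 3, x j * pdR j w x) / ‖x‖ ^ 4) * ‖u t x‖ ^ 2))
        + lam * b * (∫ x : E3,
            ((∑ j : Fin 3, x j * pdR j w x) * ‖x‖ ^ (-(2 + b))) * ‖u t x‖ ^ 4)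
        + lam * ∫ x : E3, lapR w x * (‖u t x‖ ^ 4 * ‖x‖ ^ (-b))) t :=
  virial_identity_general hb0.le (by linarith) hu hw hwpoly t
end
end
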